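/- arXiv:1210.4489 — 2 statements merged into one kernel-verified Lean document; each statement's English description precedes it below -/
import Mathlib

section
/- For every prime p > 3, the rational number Σ_{i=1}^{(p−1)/2} C(2i,i)³ · Σ_{j=1}^{i} 1/(i+j) has p-adic valuation at least 1 (i.e., it is congruent to 0 modulo p). -/
open Finset

/-!
Write `p = 2 * n + 1` and compute in a ring in which `p ^ 2 = 0`. The homogeneous polynomials `L`
and `T` with coefficients `legendreCoeff` and `trinomialCoeff`, and the polynomial
`centralBinomConv`, are Legendre polynomials in different coordinates. This gives a Landen
transformation between them, and Clausen's formula for their squares. Modulo `p ^ 2` their `n`-th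
members are also linearly related, since their coefficients agree up to partial harmonic sums.

Let `k ^ 2 + 3 * k + 4 = 0`, so that `2 * k + 3` is a square root of `-7`, and put
`B = n.centralBinom`. By Clausen's formula `L (1, -k ^ 2) ^ 2` is the sum of the
`m.centralBinom ^ 3`, while `T (-4 * k ^ 2, 1) ^ 2` is `B ^ 2` times the same sum with weights
`1 - 3 * p * ∑ j, 1 / (m + j)`. So the theorem amounts to `T ^ 2 = (B * L) ^ 2`. At this argument
the Landen transformation relates `L` to itself, a trace of complex multiplication by `ℚ(√-7)`.
If `-7` is a square modulo `p`, this forces `T = B * L`; if it is not, it forces `p` to divide both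
`T` and `B * L`. The ramified prime `7` is checked by hand.
-/

section Coefficients

lemma choose_succ_left_cast (n k : ℕ) :
    ((n : ℤ) + 1 - k) * ((n + 1).choose k : ℤ) = (n + 1) * (n.choose k : ℤ) := by
  rcases le_or_gt k (n + 1) with h | h
  · have := Nat.choose_mul_succ_eq n k
    zify [h] at this
    linarith
  · simp [Nat.choose_eq_zero_of_lt h, Nat.choose_eq_zero_of_lt (Nat.lt_of_succ_lt h)]

lemma choose_succ_right_cast (n k : ℕ) :
    ((k : ℤ) + 1) * (n.choose (k + 1) : ℤ) = (n - k) * (n.choose k : ℤ) := by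
  rcases le_or_gt k n with h | h
  · have := Nat.choose_succ_right_eq n k
    zify [h] at this
    linarith
  · simp [Nat.choose_eq_zero_of_lt h, Nat.choose_eq_zero_of_lt (Nat.lt_succ_of_lt h)]

lemma centralBinom_succ_cast (k : ℕ) :
    ((k : ℤ) + 1) * ((k + 1).centralBinom : ℤ) = 2 * (2 * k + 1) * (k.centralBinom : ℤ) := by
  exact_mod_cast Nat.succ_mul_centralBinom_succ k

/-- The coefficients of the Legendre polynomial `P_n (1 + 2 * y) = ∑ k, legendreCoeff n k * y ^ k`;
up to the sign `(-1) ^ k` they are those of `Polynomial.shiftedLegendre n`. -/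
def legendreCoeff (n k : ℕ) : ℕ := n.choose k * (n + k).choose n

/-- The coefficients of the central trinomial polynomials
`∑ k, n.choose k * k.centralBinom * y ^ k`, which are Legendre polynomials in other coordinates. -/
def trinomialCoeff (n k : ℕ) : ℕ := n.choose k * k.centralBinom

/-- The coefficients of the square of a Legendre polynomial in Clausen's formula
`P_n (b) ^ 2 = ∑ k, legendreSqCoeff n k * ((b ^ 2 - 1) / 4) ^ k`. -/
def legendreSqCoeff (n k : ℕ) : ℕ := legendreCoeff n k * k.centralBinom

lemma legendreCoeff_zero_right (n : ℕ) : legendreCoeff n 0 = 1 := by simp [legendreCoeff]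

lemma trinomialCoeff_zero_right (n : ℕ) : trinomialCoeff n 0 = 1 := by simp [trinomialCoeff]

lemma legendreSqCoeff_zero_right (n : ℕ) : legendreSqCoeff n 0 = 1 := by
  simp [legendreSqCoeff, legendreCoeff_zero_right]

lemma legendreCoeff_eq_zero_of_lt (n k : ℕ) (h : n < k) : legendreCoeff n k = 0 := by
  rw [legendreCoeff, Nat.choose_eq_zero_of_lt h, zero_mul]

lemma trinomialCoeff_eq_zero_of_lt (n k : ℕ) (h : n < k) : trinomialCoeff n k = 0 := by
  rw [trinomialCoeff, Nat.choose_eq_zero_of_lt h, zero_mul]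

lemma legendreSqCoeff_eq_zero_of_lt (n k : ℕ) (h : n < k) : legendreSqCoeff n k = 0 := by
  rw [legendreSqCoeff, legendreCoeff_eq_zero_of_lt n k h, zero_mul]

lemma legendreCoeff_self (n : ℕ) : legendreCoeff n n = n.centralBinom := by
  rw [legendreCoeff, Nat.choose_self, one_mul, Nat.centralBinom_eq_two_mul_choose, two_mul]

lemma trinomialCoeff_self (n : ℕ) : trinomialCoeff n n = n.centralBinom := by
  rw [trinomialCoeff, Nat.choose_self, one_mul]

lemma legendreCoeff_succ_left (n k : ℕ) :
    ((n : ℤ) + 1 - k) * (legendreCoeff (n + 1) k : ℤ)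
      = (n + 1 + k) * (legendreCoeff n k : ℤ) := by
  have h1 := choose_succ_left_cast n k
  have h2 := Nat.add_one_mul_choose_eq (n + k) n
  rw [show n + k + 1 = n + 1 + k by ring] at h2
  zify at h2
  have hn : (n : ℤ) + 1 ≠ 0 := by positivity
  apply mul_left_cancel₀ hn
  simp only [legendreCoeff]
  push_cast at h1 h2 ⊢
  linear_combination ((n + 1 + k).choose (n + 1) : ℤ) * (n + 1) * h1
    - ((n : ℤ) + 1) * (n.choose k) * h2

lemma legendreCoeff_succ_right (n k : ℕ) :
    ((k : ℤ) + 1) ^ 2 * (legendreCoeff n (k + 1) : ℤ)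
      = (n - k) * (n + k + 1) * (legendreCoeff n k : ℤ) := by
  have h1 := choose_succ_right_cast n k
  have h2 := choose_succ_left_cast (n + k) n
  simp only [legendreCoeff, ← add_assoc]
  push_cast at h2 ⊢
  linear_combination ((n + k + 1).choose n : ℤ) * (k + 1) * h1
    + ((n : ℤ) - k) * (n.choose k) * h2

lemma legendreCoeff_succ_succ (n k : ℕ) :
    ((k : ℤ) + 1) ^ 2 * (legendreCoeff (n + 1) (k + 1) : ℤ)
      = (n + k + 2) * (n + k + 1) * (legendreCoeff n k : ℤ) := by
  have h1 := legendreCoeff_succ_right (n + 1) k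
  have h2 := legendreCoeff_succ_left n k
  push_cast at h1
  linear_combination h1 + (n + k + 2 : ℤ) * h2

lemma trinomialCoeff_succ_left (n k : ℕ) :
    ((n : ℤ) + 1 - k) * (trinomialCoeff (n + 1) k : ℤ) = (n + 1) * (trinomialCoeff n k : ℤ) := by
  have h := choose_succ_left_cast n k
  simp only [trinomialCoeff]
  push_cast
  linear_combination (k.centralBinom : ℤ) * h

lemma trinomialCoeff_succ_right (n k : ℕ) :
    ((k : ℤ) + 1) ^ 2 * (trinomialCoeff n (k + 1) : ℤ)
      = (n - k) * (2 * (2 * k + 1)) * (trinomialCoeff n k : ℤ) := by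
  have h := choose_succ_right_cast n k
  have hc := centralBinom_succ_cast k
  simp only [trinomialCoeff]
  push_cast
  linear_combination (k + 1 : ℤ) * ((k + 1).centralBinom : ℤ) * h
    + (n - k : ℤ) * (n.choose k : ℤ) * hc

lemma trinomialCoeff_succ_succ (n k : ℕ) :
    ((k : ℤ) + 1) ^ 2 * (trinomialCoeff (n + 1) (k + 1) : ℤ)
      = (n + 1) * (2 * (2 * k + 1)) * (trinomialCoeff n k : ℤ) := by
  have h1 := trinomialCoeff_succ_right (n + 1) k
  have h2 := trinomialCoeff_succ_left n k
  push_cast at h1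
  linear_combination h1 + (2 * (2 * k + 1) : ℤ) * h2

lemma legendreCoeff_recurrence (n k : ℕ) :
    ((n : ℤ) + 2) * legendreCoeff (n + 2) (k + 1)
      = (2 * n + 3) * (legendreCoeff (n + 1) (k + 1) + 2 * legendreCoeff (n + 1) k)
        - (n + 1) * legendreCoeff n (k + 1) := by
  have hk : ((k : ℤ) + 1) ^ 2 ≠ 0 := by positivity
  apply mul_left_cancel₀ hk
  have h1 := legendreCoeff_succ_succ (n + 1) k
  have h2 := legendreCoeff_succ_succ n k
  have h3 := legendreCoeff_succ_right n k
  have h4 := legendreCoeff_succ_left n k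
  push_cast at *
  linear_combination (n + 2 : ℤ) * h1 - (2 * n + 3 : ℤ) * h2 + (n + 1 : ℤ) * h3
    + ((2 * n + 3 : ℤ) * (n + k + 2) - (n + 1) * (n - k)) * h4

lemma trinomialCoeff_recurrence (n k : ℕ) :
    ((n : ℤ) + 2) * trinomialCoeff (n + 2) (k + 1)
      = (2 * n + 3) * (trinomialCoeff (n + 1) (k + 1) + 2 * trinomialCoeff (n + 1) k)
        - (n + 1) * (trinomialCoeff n (k + 1) + 4 * trinomialCoeff n k) := by
  have hk : ((k : ℤ) + 1) ^ 2 ≠ 0 := by positivity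
  apply mul_left_cancel₀ hk
  have h1 := trinomialCoeff_succ_succ (n + 1) k
  have h2 := trinomialCoeff_succ_succ n k
  have h3 := trinomialCoeff_succ_right n k
  have h4 := trinomialCoeff_succ_left n k
  push_cast at *
  linear_combination (n + 2 : ℤ) * h1 - (2 * n + 3 : ℤ) * h2 + (n + 1 : ℤ) * h3
    + ((2 * n + 3 : ℤ) * (2 * (2 * k + 1)) - (n - k) * (2 * (2 * k + 1)) - 4 * (k + 1) ^ 2) * h4

lemma legendreSqCoeff_succ_left (n k : ℕ) :
    ((n : ℤ) + 1 - k) * (legendreSqCoeff (n + 1) k : ℤ)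
      = (n + 1 + k) * (legendreSqCoeff n k : ℤ) := by
  have h := legendreCoeff_succ_left n k
  simp only [legendreSqCoeff]
  push_cast
  linear_combination (k.centralBinom : ℤ) * h

lemma legendreSqCoeff_succ_right (n k : ℕ) :
    ((k : ℤ) + 1) ^ 3 * (legendreSqCoeff n (k + 1) : ℤ)
      = 2 * (2 * k + 1) * (n - k) * (n + k + 1) * (legendreSqCoeff n k : ℤ) := by
  have h := legendreCoeff_succ_right n k
  have hc := centralBinom_succ_cast k
  simp only [legendreSqCoeff]
  push_cast
  linear_combination ((k : ℤ) + 1) ^ 2 * legendreCoeff n (k + 1) * hc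
    + 2 * (2 * k + 1) * (k.centralBinom : ℤ) * h

lemma legendreSqCoeff_succ_succ (n k : ℕ) :
    ((k : ℤ) + 1) ^ 3 * (legendreSqCoeff (n + 1) (k + 1) : ℤ)
      = 2 * (2 * k + 1) * (n + k + 2) * (n + k + 1) * (legendreSqCoeff n k : ℤ) := by
  have h1 := legendreSqCoeff_succ_right (n + 1) k
  have h2 := legendreSqCoeff_succ_left n k
  push_cast at h1
  linear_combination h1 + (2 * (2 * k + 1) * (n + k + 2) : ℤ) * h2

lemma legendreSqCoeff_recurrence (n k : ℕ) :
    ((n : ℤ) + 2) ^ 2 * legendreSqCoeff (n + 2) (k + 1)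
      = (2 * n + 3) ^ 2 * (legendreSqCoeff (n + 1) (k + 1) + 4 * legendreSqCoeff (n + 1) k)
        - 2 * (2 * n + 3) * ((n + k + 2) * legendreSqCoeff n (k + 1)
          + 4 * ((n + k + 1) * legendreSqCoeff n k))
        + (n + 1) ^ 2 * legendreSqCoeff n (k + 1) := by
  have hk : ((k : ℤ) + 1) ^ 3 ≠ 0 := by positivity
  apply mul_left_cancel₀ hk
  have h1 := legendreSqCoeff_succ_succ (n + 1) k
  have h2 := legendreSqCoeff_succ_succ n k
  have h3 := legendreSqCoeff_succ_right n k
  have h4 := legendreSqCoeff_succ_left n k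
  push_cast at *
  linear_combination (n + 2 : ℤ) ^ 2 * h1 - (2 * n + 3 : ℤ) ^ 2 * h2
    + (2 * (2 * n + 3 : ℤ) * (n + k + 2) - (n + 1) ^ 2) * h3
    + ((2 * n + 3 : ℤ) ^ 2 * (n + k + 2) * (2 * (2 * k + 1))
      - 2 * (2 * n + 3) * (4 * (k + 1) ^ 3)
      - (2 * (2 * n + 3 : ℤ) * (n + k + 2) - (n + 1) ^ 2) * (n - k) * (2 * (2 * k + 1))) * h4

end Coefficients

section HomSum

variable {R S F : Type*} [CommRing R] [CommRing S]

/-- The homogenized `n`-th row polynomial of a triangular array `c` of coefficients. -/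
def homSum (c : ℕ → ℕ → ℕ) (x y : R) (n : ℕ) : R :=
  ∑ k ∈ range (n + 1), (c n k : R) * x ^ (n - k) * y ^ k

lemma map_homSum [FunLike F R S] [RingHomClass F R S] (φ : F) (c : ℕ → ℕ → ℕ) (x y : R) (n : ℕ) :
    φ (homSum c x y n) = homSum c (φ x) (φ y) n := by
  simp [homSum]

lemma homSum_mul_mul (c : ℕ → ℕ → ℕ) (t x y : R) (n : ℕ) :
    homSum c (t * x) (t * y) n = t ^ n * homSum c x y n := by
  rw [homSum, homSum, mul_sum]
  refine sum_congr rfl fun k hk ↦ ?_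
  rw [← pow_mul_pow_sub t (Nat.lt_succ_iff.1 (mem_range.1 hk)), mul_pow, mul_pow]
  ring

variable {c : ℕ → ℕ → ℕ}

lemma natCast_mul_pow_mul_pow_sub (hc : ∀ n k, n < k → c n k = 0) (x : R) (n k i : ℕ) :
    (c n k : R) * (x ^ i * x ^ (n - k)) = c n k * x ^ (n + i - k) := by
  rcases le_or_gt k n with h | h
  · rw [← pow_add, show i + (n - k) = n + i - k by omega]
  · simp [hc n k h]

open Polynomial

lemma eval_homSum_C_X (c : ℕ → ℕ → ℕ) (x y : R) (n : ℕ) :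
    (homSum c (C x) X n).eval y = homSum c x y n := by
  simp [homSum, eval_finsetSum]

lemma coeff_homSum_C_X (hc : ∀ n k, n < k → c n k = 0) (x : R) (n k : ℕ) :
    (homSum c (C x) X n).coeff k = c n k * x ^ (n - k) := by
  have h (j : ℕ) : (c n j : R[X]) * C x ^ (n - j) * X ^ j = C (c n j * x ^ (n - j)) * X ^ j := by
    simp
  simp only [homSum, h, finsetSum_coeff, coeff_C_mul_X_pow]
  rw [Finset.sum_ite_eq]
  split_ifs with hk
  · rfl
  · rw [hc n k (by simpa [Nat.lt_succ_iff] using hk), Nat.cast_zero, zero_mul]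

end HomSum

/-- The recurrence satisfied by `d ^ (n / 2)` times the Legendre polynomial at `b / √d`. -/
structure IsLegendreSeq {R : Type*} [CommRing R] (b d : R) (s : ℕ → R) : Prop where
  zero : s 0 = 1
  one : s 1 = b
  step : ∀ n : ℕ, ((n : R) + 2) * s (n + 2) = (2 * n + 3) * (b * s (n + 1)) - (n + 1) * (d * s n)

section IsLegendreSeq

variable {R : Type*} [CommRing R] {b d : R} {s : ℕ → R}

lemma IsLegendreSeq.congr {b' d' : R} (hs : IsLegendreSeq b d s) (hb : b = b') (hd : d = d') :
    IsLegendreSeq b' d' s :=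
  hb ▸ hd ▸ hs

lemma IsLegendreSeq.unique [IsDomain R] [CharZero R] {t : ℕ → R} (hs : IsLegendreSeq b d s)
    (ht : IsLegendreSeq b d t) (n : ℕ) : s n = t n := by
  induction n using Nat.twoStepInduction with
  | zero => rw [hs.zero, ht.zero]
  | one => rw [hs.one, ht.one]
  | more n ih ih' =>
    have h0 : (n : R) + 2 ≠ 0 := by exact_mod_cast (by omega : n + 2 ≠ 0)
    apply mul_left_cancel₀ h0
    rw [hs.step, ht.step, ih, ih']

open Polynomial

lemma homSum_recurrence {c : ℕ → ℕ → ℕ} (m : ℕ) (h0 : ∀ n, c n 0 = 1)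
    (hc : ∀ n k, n < k → c n k = 0)
    (hrec : ∀ n k : ℕ, ((n : ℤ) + 2) * c (n + 2) (k + 1)
      = (2 * n + 3) * (c (n + 1) (k + 1) + 2 * c (n + 1) k)
        - (n + 1) * (c n (k + 1) + m * c n k)) (x y : R) (n : ℕ) :
    ((n : R) + 2) * homSum c x y (n + 2) = (2 * n + 3) * ((x + 2 * y) * homSum c x y (n + 1))
      - (n + 1) * (x * (x + m * y) * homSum c x y n) := by
  suffices h : C ((n : R) + 2) * homSum c (C x) X (n + 2)
      = C (2 * n + 3 : R) * (C x * homSum c (C x) X (n + 1))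
        + C (2 * (2 * n + 3) : R) * (X * homSum c (C x) X (n + 1))
        - C ((n : R) + 1) * (C (x ^ 2) * homSum c (C x) X n)
        - C (m * (n + 1) : R) * (X * (C x * homSum c (C x) X n)) by
    have h' := congrArg (eval y) h
    simp only [eval_add, eval_sub, eval_mul, eval_C, eval_X, eval_homSum_C_X] at h'
    linear_combination h'
  ext (_ | k)
  · simp only [coeff_add, coeff_sub, mul_coeff_zero, coeff_C_zero, coeff_X_zero,
      coeff_homSum_C_X hc, h0, Nat.sub_zero]
    ring
  · simp only [coeff_add, coeff_sub, coeff_C_mul, coeff_X_mul, coeff_homSum_C_X hc]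
    have shift := natCast_mul_pow_mul_pow_sub hc x
    have e1 := shift (n + 1) (k + 1) 1
    have e2 := shift n (k + 1) 2
    have e3 := shift n k 1
    rw [show n + 1 - k = n + 1 + 1 - (k + 1) by omega] at *
    have h := congrArg (Int.cast : ℤ → R) (hrec n k)
    push_cast at h
    linear_combination x ^ (n + 2 - (k + 1)) * h - (2 * n + 3 : R) * e1 + (n + 1 : R) * e2
      + (m * (n + 1) : R) * e3

lemma isLegendreSeq_homSum_legendreCoeff (x y : R) :
    IsLegendreSeq (x + 2 * y) (x ^ 2) (homSum legendreCoeff x y) where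
  zero := by simp [homSum, legendreCoeff]
  one := by simp [homSum, sum_range_succ, legendreCoeff_zero_right, legendreCoeff_self,
    Nat.centralBinom]
  step n := by
    simpa [sq] using homSum_recurrence 0 legendreCoeff_zero_right legendreCoeff_eq_zero_of_lt
      (by simpa using legendreCoeff_recurrence) x y n

lemma isLegendreSeq_homSum_trinomialCoeff (x y : R) :
    IsLegendreSeq (x + 2 * y) (x * (x + 4 * y)) (homSum trinomialCoeff x y) where
  zero := by simp [homSum, trinomialCoeff]
  one := by simp [homSum, sum_range_succ, trinomialCoeff_zero_right, trinomialCoeff_self,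
    Nat.centralBinom]
  step n := by
    simpa using homSum_recurrence 4 trinomialCoeff_zero_right trinomialCoeff_eq_zero_of_lt
      (by simpa using trinomialCoeff_recurrence) x y n

end IsLegendreSeq

/-- The coefficients of `(n + 1) * P_n (b) * P_{n + 1} (b) / b` in powers of `(b ^ 2 - 1) / 4`,
the companion of `legendreSqCoeff` in the coupled recurrences behind Clausen's formula. -/
def legendreProdCoeff (n k : ℕ) : ℕ := (n + k + 1) * legendreSqCoeff n k

lemma legendreProdCoeff_zero_right (n : ℕ) : legendreProdCoeff n 0 = n + 1 := by
  simp [legendreProdCoeff, legendreSqCoeff_zero_right]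

lemma legendreProdCoeff_eq_zero_of_lt (n k : ℕ) (h : n < k) : legendreProdCoeff n k = 0 := by
  rw [legendreProdCoeff, legendreSqCoeff_eq_zero_of_lt n k h, mul_zero]

section Clausen

variable {R : Type*} [CommRing R] {b d e : R} {s : ℕ → R}

open Polynomial

lemma homSum_legendreSqCoeff_succ (d e : R) (n : ℕ) :
    (2 * (n : R) + 3) * homSum legendreSqCoeff d e (n + 1)
      = homSum legendreProdCoeff d e (n + 1) + d * homSum legendreProdCoeff d e n := by
  suffices h : C (2 * (n : R) + 3) * homSum legendreSqCoeff (C d) X (n + 1)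
      = homSum legendreProdCoeff (C d) X (n + 1) + C d * homSum legendreProdCoeff (C d) X n by
    simpa [eval_homSum_C_X] using congrArg (eval e) h
  ext k
  simp only [coeff_add, coeff_C_mul, coeff_homSum_C_X legendreSqCoeff_eq_zero_of_lt,
    coeff_homSum_C_X legendreProdCoeff_eq_zero_of_lt]
  have shift := natCast_mul_pow_mul_pow_sub legendreSqCoeff_eq_zero_of_lt d n k 1
  have h := congrArg (Int.cast : ℤ → R) (legendreSqCoeff_succ_left n k)
  simp only [legendreProdCoeff]
  push_cast at h ⊢
  linear_combination d ^ (n + 1 - k) * h - (n + k + 1 : R) * shift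

lemma homSum_legendreSqCoeff_recurrence (d e : R) (n : ℕ) :
    ((n : R) + 2) ^ 2 * homSum legendreSqCoeff d e (n + 2)
      = (2 * n + 3) ^ 2 * (d + 4 * e) * homSum legendreSqCoeff d e (n + 1)
        - 2 * (2 * n + 3) * (d + 4 * e) * d * homSum legendreProdCoeff d e n
        + (n + 1) ^ 2 * d ^ 2 * homSum legendreSqCoeff d e n := by
  let V := homSum legendreSqCoeff (C d) X
  let W := homSum legendreProdCoeff (C d) X
  have hV := coeff_homSum_C_X legendreSqCoeff_eq_zero_of_lt d
  have hW := coeff_homSum_C_X legendreProdCoeff_eq_zero_of_lt d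
  suffices h : C (((n : R) + 2) ^ 2) * V (n + 2)
      = C ((2 * n + 3) ^ 2 : R) * (C d * V (n + 1))
        + C (4 * (2 * n + 3) ^ 2 : R) * (X * V (n + 1))
        - C (2 * (2 * n + 3) : R) * (C (d ^ 2) * W n)
        - C (8 * (2 * n + 3) : R) * (X * (C d * W n))
        + C (((n : R) + 1) ^ 2) * (C (d ^ 2) * V n) by
    have h' := congrArg (eval e) h
    simp only [V, W, eval_add, eval_sub, eval_mul, eval_C, eval_X, eval_homSum_C_X] at h'
    linear_combination h'
  ext (_ | k)
  · simp only [V, W, coeff_add, coeff_sub, mul_coeff_zero, coeff_C_zero, coeff_X_zero, hV, hW,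
      legendreSqCoeff_zero_right, legendreProdCoeff_zero_right, Nat.sub_zero]
    push_cast
    ring
  · simp only [V, W, coeff_add, coeff_sub, coeff_C_mul, coeff_X_mul, hV, hW, legendreProdCoeff,
      Nat.cast_mul, Nat.cast_add, Nat.cast_one]
    have shift := natCast_mul_pow_mul_pow_sub legendreSqCoeff_eq_zero_of_lt d
    have e1 := shift (n + 1) (k + 1) 1
    have e2 := shift n (k + 1) 2
    have e3 := shift n k 1
    have h := congrArg (Int.cast : ℤ → R) (legendreSqCoeff_recurrence n k)
    rw [show n + 1 - k = n + 1 + 1 - (k + 1) by omega] at *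
    push_cast at h
    linear_combination d ^ (n + 2 - (k + 1)) * h - (2 * n + 3 : R) ^ 2 * e1
      + (2 * (2 * n + 3) * (n + k + 2) - (n + 1) ^ 2 : R) * e2
      + (8 * (2 * n + 3) * (n + k + 1) : R) * e3

lemma IsLegendreSeq.sq [IsDomain R] [CharZero R] (hs : IsLegendreSeq b d s)
    (hb : b ^ 2 = d + 4 * e) (n : ℕ) : s n ^ 2 = homSum legendreSqCoeff d e n := by
  suffices h : s n ^ 2 = homSum legendreSqCoeff d e n
      ∧ s (n + 1) ^ 2 = homSum legendreSqCoeff d e (n + 1)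
      ∧ ((n : R) + 1) * (s n * s (n + 1)) = b * homSum legendreProdCoeff d e n from h.1
  induction n with
  | zero =>
    rw [zero_add, hs.zero, hs.one, hb]
    simp [homSum, sum_range_succ, legendreProdCoeff, legendreSqCoeff, legendreCoeff,
      Nat.centralBinom]
    norm_num
  | succ n ih =>
    obtain ⟨ih1, ih2, ih3⟩ := ih
    refine ⟨ih2, ?_, ?_⟩
    · have h0 : ((n : R) + 2) ^ 2 ≠ 0 := pow_ne_zero _ (by exact_mod_cast (by omega : n + 2 ≠ 0))
      apply mul_left_cancel₀ h0
      rw [homSum_legendreSqCoeff_recurrence, ← mul_pow, hs.step, ← ih1, ← ih2, ← hb]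
      linear_combination (-2 * (2 * n + 3) * b * d : R) * ih3
    · push_cast
      linear_combination s (n + 1) * hs.step n + (2 * n + 3 : R) * b * ih2
        + b * homSum_legendreSqCoeff_succ d e n - d * ih3

end Clausen

/-- The polynomial in `c` whose `k`-th coefficient is
`k.centralBinom * (n - k).centralBinom`, that is, the coefficient of `X ^ n` in
`1 / √((1 - 4 * X) * (1 - 4 * c * X))`. -/
def centralBinomConv {R : Type*} [CommRing R] (c : R) (n : ℕ) : R :=
  ∑ k ∈ range (n + 1), (k.centralBinom : R) * (n - k).centralBinom * c ^ k

section CentralBinomConv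

variable {R S F : Type*} [CommRing R] [CommRing S]

lemma map_centralBinomConv [FunLike F R S] [RingHomClass F R S] (φ : F) (c : R) (n : ℕ) :
    φ (centralBinomConv c n) = centralBinomConv (φ c) n := by
  simp [centralBinomConv]

open PowerSeries

lemma isLegendreSeq_coeff {b d : R} {f : R⟦X⟧} (h0 : constantCoeff f = 1)
    (hf : (1 - C (2 * b) * X + C d * X ^ 2) * derivative R f = (C b - C d * X) * f) :
    IsLegendreSeq b d (fun n ↦ coeff n f) where
  zero := by simpa using h0
  one := by
    have h : coeff 0 (derivative R f) = b := by simpa [h0] using congrArg constantCoeff hf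
    simpa [coeff_derivative] using h
  step n := by
    have h := congrArg (coeff (n + 1)) (show derivative R f = C (2 * b) * (X * derivative R f)
      - C d * (X * (X * derivative R f)) + C b * f - C d * (X * f) by linear_combination hf)
    have hX : coeff n (X * derivative R f) = n * coeff n f := by
      rcases n with _ | n
      · simp
      · rw [coeff_succ_X_mul, coeff_derivative, mul_comm]
        push_cast
        rfl
    simp only [map_add, map_sub, coeff_C_mul, coeff_succ_X_mul, hX, coeff_derivative] at h
    push_cast at h
    linear_combination h

lemma derivative_mk_centralBinom_mul_pow (c : R) :
    (1 - C (4 * c) * X) * derivative R (PowerSeries.mk fun k ↦ (k.centralBinom : R) * c ^ k)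
      = C (2 * c) * PowerSeries.mk fun k ↦ (k.centralBinom : R) * c ^ k := by
  rw [sub_mul, one_mul, mul_assoc]
  ext (_ | k)
  · simp only [map_sub, coeff_C_mul, coeff_zero_X_mul, coeff_derivative, coeff_mk]
    simp [Nat.centralBinom, mul_comm]
  · have h := congrArg (Int.cast : ℤ → R) (centralBinom_succ_cast (k + 1))
    simp only [map_sub, coeff_C_mul, coeff_succ_X_mul, coeff_derivative, coeff_mk]
    push_cast at h ⊢
    linear_combination c ^ (k + 2) * h

lemma isLegendreSeq_centralBinomConv (c : R) :
    IsLegendreSeq (2 * (1 + c)) (16 * c) (centralBinomConv c) := by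
  let f (a : R) : R⟦X⟧ := PowerSeries.mk fun k ↦ (k.centralBinom : R) * a ^ k
  have hcoeff : centralBinomConv c = fun n ↦ coeff n (f c * f 1) := by
    ext n
    simp [f, coeff_mul, Nat.sum_antidiagonal_eq_sum_range_succ_mk, centralBinomConv, mul_right_comm]
  rw [hcoeff]
  refine isLegendreSeq_coeff (by simp [f]) ?_
  have h1 := derivative_mk_centralBinom_mul_pow (1 : R)
  have hc := derivative_mk_centralBinom_mul_pow c
  rw [Derivation.leibniz, smul_eq_mul, smul_eq_mul]
  simp only [map_add, map_mul, map_ofNat, map_one] at h1 hc ⊢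
  linear_combination f 1 * (1 - 4 * X) * hc + f c * (1 - 4 * C c * X) * h1

end CentralBinomConv

section Identities

variable {R : Type*} [CommRing R]

open Polynomial

lemma homSum_legendreCoeff_landen (z : R) (n : ℕ) :
    homSum legendreCoeff (-4 * z) ((1 + z) ^ 2) n = centralBinomConv (z ^ 2) n := by
  have h : homSum legendreCoeff (-4 * X : ℤ[X]) ((1 + X) ^ 2) n = centralBinomConv (X ^ 2) n :=
    ((isLegendreSeq_homSum_legendreCoeff _ _).congr (by ring) (by ring)).unique
      (isLegendreSeq_centralBinomConv _) n
  simpa [map_homSum, map_centralBinomConv, map_ofNat (aeval (R := ℤ) z)]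
    using congrArg (aeval (R := ℤ) z) h

lemma homSum_trinomialCoeff_four_neg (z : R) (n : ℕ) :
    homSum trinomialCoeff 4 (-z) n = centralBinomConv (1 - z) n := by
  have h : homSum trinomialCoeff (4 : ℤ[X]) (-X) n = centralBinomConv (1 - X) n :=
    ((isLegendreSeq_homSum_trinomialCoeff _ _).congr (by ring) (by ring)).unique
      (isLegendreSeq_centralBinomConv _) n
  simpa [map_homSum, map_centralBinomConv, map_ofNat (aeval (R := ℤ) z)]
    using congrArg (aeval (R := ℤ) z) h

lemma homSum_legendreCoeff_sq (z : R) (n : ℕ) :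
    homSum legendreCoeff 1 (-z) n ^ 2 = homSum legendreSqCoeff 1 (z ^ 2 - z) n := by
  have h : homSum legendreCoeff (1 : ℤ[X]) (-X) n ^ 2 = homSum legendreSqCoeff 1 (X ^ 2 - X) n :=
    ((isLegendreSeq_homSum_legendreCoeff _ _).congr rfl (one_pow 2)).sq (by ring) n
  simpa [map_homSum, map_ofNat (aeval (R := ℤ) z)] using congrArg (aeval (R := ℤ) z) h

lemma homSum_trinomialCoeff_sq (z : R) (n : ℕ) :
    homSum trinomialCoeff (-4 * z) 1 n ^ 2 = homSum legendreSqCoeff (16 * (z ^ 2 - z)) 1 n := by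
  have h : homSum trinomialCoeff (-4 * X : ℤ[X]) 1 n ^ 2
      = homSum legendreSqCoeff (16 * (X ^ 2 - X)) 1 n :=
    ((isLegendreSeq_homSum_trinomialCoeff _ _).congr rfl (by ring)).sq (by ring) n
  simpa [map_homSum, map_ofNat (aeval (R := ℤ) z)] using congrArg (aeval (R := ℤ) z) h

lemma homSum_legendreCoeff_one_neg (z : R) (n : ℕ) :
    homSum legendreCoeff 1 (-z) n = aeval z (shiftedLegendre n) := by
  simp only [homSum, shiftedLegendre, legendreCoeff, one_pow, mul_one, map_sum, map_mul, map_pow,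
    aeval_X, aeval_C, map_neg, map_one]
  refine sum_congr rfl fun k _ ↦ ?_
  rw [neg_pow]
  push_cast
  ring

lemma homSum_legendreCoeff_neg_one_sub (z : R) (n : ℕ) :
    homSum legendreCoeff 1 (-(1 - z)) n = (-1) ^ n * homSum legendreCoeff 1 (-z) n := by
  rw [homSum_legendreCoeff_one_neg, homSum_legendreCoeff_one_neg, shiftedLegendre_eval_symm,
    sub_sub_cancel]

lemma homSum_legendreCoeff_one_neg_one (n : ℕ) :
    homSum legendreCoeff (1 : R) (-1) n = (-1) ^ n := by
  simpa [homSum, sum_range_succ', legendreCoeff_zero_right]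
    using homSum_legendreCoeff_neg_one_sub (0 : R) n

lemma homSum_legendreCoeff_neg_one_one (n : ℕ) : homSum legendreCoeff (-1 : R) 1 n = 1 := by
  have h := homSum_mul_mul legendreCoeff (-1 : R) 1 (-1) n
  rw [homSum_legendreCoeff_one_neg_one, ← mul_pow] at h
  simpa using h

lemma centralBinomConv_one (n : ℕ) : centralBinomConv (1 : R) n = 4 ^ n := by
  have h := homSum_legendreCoeff_landen (1 : R) n
  rw [show (-4 * 1 : R) = 4 * -1 by ring, show (1 + 1 : R) ^ 2 = 4 * 1 by ring,
    homSum_mul_mul, homSum_legendreCoeff_neg_one_one] at h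
  simpa using h.symm

end Identities

section Expansions

open scoped Ring

/-- The sum of the inverses of the first `k` odd numbers. -/
noncomputable def oddHarmonic (R : Type*) [CommRing R] (k : ℕ) : R :=
  ∑ j ∈ range k, (2 * (j : R) + 1)⁻¹ʳ

/-- The sum of the inverses of the first `k` positive even numbers. -/
noncomputable def evenHarmonic (R : Type*) [CommRing R] (k : ℕ) : R :=
  ∑ j ∈ range k, (2 * (j : R) + 2)⁻¹ʳ

variable {R : Type*} [CommRing R] {n k : ℕ}

lemma oddHarmonic_succ (k : ℕ) :
    oddHarmonic R (k + 1) = oddHarmonic R k + (2 * (k : R) + 1)⁻¹ʳ :=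
  sum_range_succ _ _

lemma evenHarmonic_succ (k : ℕ) :
    evenHarmonic R (k + 1) = evenHarmonic R k + (2 * (k : R) + 2)⁻¹ʳ :=
  sum_range_succ _ _

lemma isUnit_natCast_of_coprime {p m : ℕ} (hp : (p : R) ^ 2 = 0) (hm : m.Coprime p) :
    IsUnit (m : R) := by
  obtain ⟨a, b, h⟩ := Nat.isCoprime_iff_coprime.2 (hm.pow_right 2)
  have h' := congrArg (Int.cast : ℤ → R) h
  push_cast at h'
  rw [hp, mul_zero, add_zero, mul_comm] at h'
  exact IsUnit.of_mul_eq_one _ h'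

lemma isUnit_natCast_of_lt (hprime : (2 * n + 1).Prime) (hp : (2 * (n : R) + 1) ^ 2 = 0) {j : ℕ}
    (h0 : j ≠ 0) (hj : j < 2 * n + 1) : IsUnit (j : R) :=
  isUnit_natCast_of_coprime (p := 2 * n + 1) (by exact_mod_cast hp)
    (Nat.coprime_of_lt_prime h0 hj hprime).symm

lemma isUnit_two (hprime : (2 * n + 1).Prime) (hp : (2 * (n : R) + 1) ^ 2 = 0) :
    IsUnit (2 : R) := by
  have := hprime.two_le
  exact_mod_cast isUnit_natCast_of_lt hprime hp two_ne_zero (by omega)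

lemma isUnit_four (hprime : (2 * n + 1).Prime) (hp : (2 * (n : R) + 1) ^ 2 = 0) :
    IsUnit (4 : R) := by
  convert (isUnit_two hprime hp).pow 2 using 1
  norm_num

lemma isUnit_natCast_add_one (hprime : (2 * n + 1).Prime) (hp : (2 * (n : R) + 1) ^ 2 = 0)
    (hk : k < n) : IsUnit ((k : R) + 1) := by
  exact_mod_cast isUnit_natCast_of_lt hprime hp k.succ_ne_zero (by omega)

lemma isUnit_two_mul_sub (hprime : (2 * n + 1).Prime) (hp : (2 * (n : R) + 1) ^ 2 = 0)
    (hk : k < n) : IsUnit (2 * (n : R) - 2 * k - 1) := by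
  obtain ⟨m, rfl⟩ := Nat.exists_eq_add_of_le' hk
  convert isUnit_natCast_of_lt hprime hp (2 * m).succ_ne_zero (by omega) using 1
  push_cast
  ring

lemma isUnit_centralBinom (hprime : (2 * n + 1).Prime) (hp : (2 * (n : R) + 1) ^ 2 = 0)
    (hk : k ≤ n) : IsUnit (k.centralBinom : R) := by
  refine isUnit_natCast_of_coprime (p := 2 * n + 1) (by exact_mod_cast hp) ?_
  refine ((Nat.Prime.coprime_iff_not_dvd hprime).2 fun h ↦ ?_).symm
  rw [Nat.centralBinom_eq_two_mul_choose] at h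
  have := (hprime.dvd_factorial).1 (h.trans (Nat.choose_mul_factorial_mul_factorial
    (show k ≤ 2 * k by omega) ▸ dvd_mul_of_dvd_left (dvd_mul_right _ _) _))
  omega

lemma mul_inverse_odd (hprime : (2 * n + 1).Prime) (hp : (2 * (n : R) + 1) ^ 2 = 0)
    (hk : k < n) : (2 * (k : R) + 1) * (2 * (k : R) + 1)⁻¹ʳ = 1 :=
  Ring.mul_inverse_cancel _ (by
    exact_mod_cast isUnit_natCast_of_lt hprime hp (2 * k).succ_ne_zero (by omega))

lemma mul_inverse_even (hprime : (2 * n + 1).Prime) (hp : (2 * (n : R) + 1) ^ 2 = 0)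
    (hk : k < n) : (2 * (k : R) + 2) * (2 * (k : R) + 2)⁻¹ʳ = 1 :=
  Ring.mul_inverse_cancel _ (by
    exact_mod_cast isUnit_natCast_of_lt hprime hp (2 * k + 1).succ_ne_zero (by omega))

lemma sum_Icc_inverse_add (hprime : (2 * n + 1).Prime) (hp : (2 * (n : R) + 1) ^ 2 = 0)
    (hk : k ≤ n) :
    ∑ j ∈ Icc 1 k, ((k + j : ℕ) : R)⁻¹ʳ = oddHarmonic R k - evenHarmonic R k := by
  have shift (m : ℕ) : ∑ j ∈ Icc 1 m, ((m + j : ℕ) : R)⁻¹ʳ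
      = ∑ j ∈ Ico (m + 1) (2 * m + 1), (j : R)⁻¹ʳ := by
    rw [← Ico_add_one_right_eq_Icc, sum_Ico_add (fun j : ℕ ↦ (j : R)⁻¹ʳ), add_comm 1 m,
      add_right_comm, two_mul]
  rw [shift]
  induction k with
  | zero => simp [oddHarmonic, evenHarmonic]
  | succ k ih =>
    have halve : ((k + 1 : ℕ) : R)⁻¹ʳ = 2 * (2 * (k : R) + 2)⁻¹ʳ := by
      have h1 := Ring.mul_inverse_cancel _
        (isUnit_natCast_of_lt hprime hp k.succ_ne_zero (by omega))
      have h2 := mul_inverse_even hprime hp hk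
      push_cast at h1 ⊢
      linear_combination 2 * (2 * (k : R) + 2)⁻¹ʳ * h1 - ((k : R) + 1)⁻¹ʳ * h2
    have bot := sum_eq_sum_Ico_succ_bot (show k + 1 < 2 * k + 1 + 1 + 1 by omega)
      fun j ↦ (j : R)⁻¹ʳ
    rw [sum_Ico_succ_top (by omega), sum_Ico_succ_top (by omega), ih (by omega), halve] at bot
    rw [oddHarmonic_succ, evenHarmonic_succ]
    push_cast at bot ⊢
    linear_combination -bot

lemma legendreCoeff_succ_of_sq_eq_zero (hp : (2 * (n : R) + 1) ^ 2 = 0) (k : ℕ) :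
    4 * ((k : R) + 1) ^ 2 * ((-1) ^ (k + 1) * legendreCoeff n (k + 1))
      = (2 * k + 1) ^ 2 * ((-1) ^ k * legendreCoeff n k) := by
  have h := congrArg (Int.cast : ℤ → R) (legendreCoeff_succ_right n k)
  push_cast at h
  linear_combination (-4 * (-1) ^ k : R) * h - (-1) ^ k * legendreCoeff n k * hp

lemma eq_mul_legendreCoeff_mul_of_ratio (hprime : (2 * n + 1).Prime)
    (hp : (2 * (n : R) + 1) ^ 2 = 0) {x E u v : ℕ → R} (hE0 : E 0 = 1)
    (hu : ∀ k < n, IsUnit (u k)) (hx : ∀ k < n, u k * x (k + 1) = v k * x k)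
    (hE : ∀ k < n, 4 * ((k : R) + 1) ^ 2 * v k * E k = u k * (2 * k + 1) ^ 2 * E (k + 1))
    (hk : k ≤ n) : x k = x 0 * ((-1) ^ k * legendreCoeff n k) * E k := by
  induction k with
  | zero => simp [hE0, legendreCoeff_zero_right]
  | succ k ih =>
    have h4 : IsUnit (4 * ((k : R) + 1) ^ 2) :=
      (isUnit_four hprime hp).mul ((isUnit_natCast_add_one hprime hp hk).pow 2)
    apply (hu k hk).mul_left_cancel
    apply h4.mul_left_cancel
    linear_combination 4 * ((k : R) + 1) ^ 2 * hx k hk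
      + 4 * ((k : R) + 1) ^ 2 * v k * ih (by omega)
      + x 0 * ((-1) ^ k * legendreCoeff n k) * hE k hk
      - u k * x 0 * E (k + 1) * legendreCoeff_succ_of_sq_eq_zero hp k

lemma centralBinom_sq_eq (hprime : (2 * n + 1).Prime) (hp : (2 * (n : R) + 1) ^ 2 = 0)
    (hk : k ≤ n) : (k.centralBinom : R) ^ 2 = (-1) ^ k * legendreCoeff n k * 16 ^ k := by
  have key := eq_mul_legendreCoeff_mul_of_ratio hprime hp (k := k)
    (x := fun k ↦ (k.centralBinom : R) ^ 2) (E := fun k ↦ 16 ^ k)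
    (u := fun k ↦ ((k : R) + 1) ^ 2) (v := fun k ↦ 4 * (2 * k + 1) ^ 2) (pow_zero _)
    (fun k hk ↦ (isUnit_natCast_add_one hprime hp hk).pow 2) ?_
    (fun k _ ↦ by simp only [pow_succ]; ring) hk
  · simpa using key
  · intro k _
    have h := congrArg (Int.cast : ℤ → R) (centralBinom_succ_cast k)
    push_cast at h
    linear_combination
      ((k + 1) * (k + 1).centralBinom + 2 * (2 * k + 1) * k.centralBinom : R) * h

lemma centralBinom_sub_recurrence (hk : k < n) :
    ((n : R) - k) * (n - k).centralBinom
      = 2 * (2 * n - 2 * k - 1) * (n - (k + 1)).centralBinom := by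
  obtain ⟨m, rfl⟩ := Nat.exists_eq_add_of_le' hk
  have h := congrArg (Int.cast : ℤ → R) (centralBinom_succ_cast m)
  rw [show m + (k + 1) - k = m + 1 by omega, Nat.add_sub_cancel]
  push_cast at h ⊢
  linear_combination h

lemma centralBinom_mul_centralBinom_sub_eq (hprime : (2 * n + 1).Prime)
    (hp : (2 * (n : R) + 1) ^ 2 = 0) (hk : k ≤ n) :
    (k.centralBinom : R) * (n - k).centralBinom
      = n.centralBinom * ((-1) ^ k * legendreCoeff n k)
        * (1 + (2 * n + 1) * (evenHarmonic R k - oddHarmonic R k)) := by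
  have key := eq_mul_legendreCoeff_mul_of_ratio hprime hp (k := k)
    (x := fun k ↦ (k.centralBinom : R) * (n - k).centralBinom)
    (E := fun k ↦ 1 + (2 * n + 1) * (evenHarmonic R k - oddHarmonic R k))
    (u := fun k ↦ (k + 1) * (2 * n - 2 * k - 1)) (v := fun k ↦ (2 * k + 1) * (n - k))
    (by simp [evenHarmonic, oddHarmonic])
    (fun k hk ↦ (isUnit_natCast_add_one hprime hp hk).mul (isUnit_two_mul_sub hprime hp hk))
    ?_ ?_ hk
  · simpa using key
  · intro k hk
    have h := congrArg (Int.cast : ℤ → R) (centralBinom_succ_cast k)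
    have h' := centralBinom_sub_recurrence (R := R) hk
    push_cast at h
    linear_combination (2 * n - 2 * k - 1 : R) * (n - (k + 1)).centralBinom * h
      - (2 * k + 1 : R) * k.centralBinom * h'
  · intro k hk
    rw [evenHarmonic_succ, oddHarmonic_succ]
    linear_combination (2 * k + 1 : R) * (k + 1)
      * ((evenHarmonic R k - oddHarmonic R k
          - (2 * k + 1) * ((2 * (k : R) + 2)⁻¹ʳ - (2 * (k : R) + 1)⁻¹ʳ)) * hp
        + (2 * n + 1) * ((2 * k + 1) * mul_inverse_even hprime hp hk
          - (2 * k + 2) * mul_inverse_odd hprime hp hk))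

lemma legendreCoeff_sub_eq (hprime : (2 * n + 1).Prime) (hp : (2 * (n : R) + 1) ^ 2 = 0)
    (hk : k ≤ n) :
    (-1) ^ k * (legendreCoeff n (n - k) : R)
      = n.centralBinom * ((-1) ^ k * legendreCoeff n k)
        * (1 + 2 * (2 * n + 1) * (evenHarmonic R k - oddHarmonic R k)) := by
  have key := eq_mul_legendreCoeff_mul_of_ratio hprime hp (k := k)
    (x := fun k ↦ (-1) ^ k * (legendreCoeff n (n - k) : R))
    (E := fun k ↦ 1 + 2 * (2 * n + 1) * (evenHarmonic R k - oddHarmonic R k))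
    (u := fun k ↦ (k + 1) * (2 * n - k)) (v := fun k ↦ -(n - k) ^ 2)
    (by simp [evenHarmonic, oddHarmonic]) ?_ ?_ ?_ hk
  · simpa [legendreCoeff_self] using key
  · intro k hk
    have h := isUnit_natCast_of_lt (j := 2 * n - k) hprime hp (by omega) (by omega)
    rw [Nat.cast_sub (by omega)] at h
    push_cast at h
    exact (isUnit_natCast_add_one hprime hp hk).mul h
  · intro k hk
    obtain ⟨m, rfl⟩ := Nat.exists_eq_add_of_le' hk
    have h := congrArg (Int.cast : ℤ → R) (legendreCoeff_succ_right (m + (k + 1)) m)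
    rw [show m + (k + 1) - k = m + 1 by omega, Nat.add_sub_cancel, pow_succ]
    push_cast at h ⊢
    linear_combination ((-1) ^ k : R) * h
  · intro k hk
    rw [evenHarmonic_succ, oddHarmonic_succ]
    linear_combination (k + 1 : R)
      * ((-(k + 1) * (1 + 2 * (2 * n + 1) * (evenHarmonic R k - oddHarmonic R k))
          + 2 * (2 * k + 1) * (evenHarmonic R k - oddHarmonic R k)
          - 2 * (2 * k + 1) ^ 2 * ((2 * (k : R) + 2)⁻¹ʳ - (2 * (k : R) + 1)⁻¹ʳ)) * hp
        + (2 * n + 1) * (2 * k + 1) * ((2 * k + 1) * mul_inverse_even hprime hp hk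
          - (2 * k + 2) * mul_inverse_odd hprime hp hk))

lemma trinomialCoeff_sub_eq (hprime : (2 * n + 1).Prime) (hp : (2 * (n : R) + 1) ^ 2 = 0)
    (hk : k ≤ n) :
    (-4) ^ k * (trinomialCoeff n (n - k) : R)
      = n.centralBinom * ((-1) ^ k * legendreCoeff n k)
        * (1 + (2 * n + 1) * (evenHarmonic R k - 2 * oddHarmonic R k)) := by
  have key := eq_mul_legendreCoeff_mul_of_ratio hprime hp (k := k)
    (x := fun k ↦ (-4) ^ k * (trinomialCoeff n (n - k) : R))
    (E := fun k ↦ 1 + (2 * n + 1) * (evenHarmonic R k - 2 * oddHarmonic R k))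
    (u := fun k ↦ 2 * ((k + 1) * (2 * n - 2 * k - 1))) (v := fun k ↦ -4 * (n - k) ^ 2)
    (by simp [evenHarmonic, oddHarmonic]) ?_ ?_ ?_ hk
  · simpa [trinomialCoeff_self] using key
  · exact fun k hk ↦ (isUnit_two hprime hp).mul
      ((isUnit_natCast_add_one hprime hp hk).mul (isUnit_two_mul_sub hprime hp hk))
  · intro k hk
    obtain ⟨m, rfl⟩ := Nat.exists_eq_add_of_le' hk
    have h := congrArg (Int.cast : ℤ → R) (trinomialCoeff_succ_right (m + (k + 1)) m)
    rw [show m + (k + 1) - k = m + 1 by omega, Nat.add_sub_cancel, pow_succ]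
    push_cast at h ⊢
    linear_combination (4 * (-4) ^ k : R) * h
  · intro k hk
    rw [evenHarmonic_succ, oddHarmonic_succ]
    linear_combination (2 * k + 2 : R)
      * ((-(2 * k + 2) * (1 + (2 * n + 1) * (evenHarmonic R k - 2 * oddHarmonic R k))
          + (2 * k + 1) * (2 * k + 3) * (evenHarmonic R k - 2 * oddHarmonic R k)
          - (2 * k + 1) ^ 2 * ((2 * (k : R) + 2)⁻¹ʳ - 2 * (2 * (k : R) + 1)⁻¹ʳ)) * hp
        + (2 * n + 1) * (2 * k + 1) * ((2 * k + 1) * mul_inverse_even hprime hp hk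
          - 2 * (2 * k + 2) * mul_inverse_odd hprime hp hk))

lemma trinomialCoeff_mul_four_pow_sub_eq (hprime : (2 * n + 1).Prime)
    (hp : (2 * (n : R) + 1) ^ 2 = 0) (hk : k ≤ n) :
    trinomialCoeff n k * 4 ^ (n - k) * (-1 : R) ^ k
      = 4 ^ n * ((-1) ^ k * legendreCoeff n k) * (1 - (2 * n + 1) * oddHarmonic R k) := by
  have key := eq_mul_legendreCoeff_mul_of_ratio hprime hp (k := k)
    (x := fun k ↦ trinomialCoeff n k * 4 ^ (n - k) * (-1 : R) ^ k)
    (E := fun k ↦ 1 - (2 * n + 1) * oddHarmonic R k)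
    (u := fun k ↦ 4 * (k + 1) ^ 2) (v := fun k ↦ -2 * (n - k) * (2 * k + 1))
    (by simp [oddHarmonic]) ?_ ?_ ?_ hk
  · simpa [trinomialCoeff_zero_right] using key
  · exact fun k hk ↦ (isUnit_four hprime hp).mul ((isUnit_natCast_add_one hprime hp hk).pow 2)
  · intro k hk
    obtain ⟨m, rfl⟩ := Nat.exists_eq_add_of_le' hk
    have h := congrArg (Int.cast : ℤ → R) (trinomialCoeff_succ_right (m + (k + 1)) k)
    rw [show m + (k + 1) - k = m + 1 by omega, Nat.add_sub_cancel, pow_succ, pow_succ]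
    push_cast at h ⊢
    linear_combination (-4 * 4 ^ m * (-1) ^ k : R) * h
  · intro k hk
    rw [oddHarmonic_succ]
    linear_combination (2 * k + 2 : R) ^ 2 * (2 * k + 1)
      * (oddHarmonic R k * hp + (2 * n + 1) * mul_inverse_odd hprime hp hk)

end Expansions

section Relations

open scoped Ring

variable {R : Type*} [CommRing R] {n : ℕ}

lemma homSum_reflect (c : ℕ → ℕ → ℕ) (x y : R) (n : ℕ) :
    homSum c x y n = ∑ k ∈ range (n + 1), (c n (n - k) : R) * x ^ k * y ^ (n - k) := by
  rw [homSum, ← sum_range_reflect]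
  refine sum_congr rfl fun k hk ↦ ?_
  rw [show n + 1 - 1 - k = n - k by omega,
    Nat.sub_sub_self (Nat.lt_succ_iff.1 (mem_range.1 hk))]

lemma homSum_one_neg (c : ℕ → ℕ → ℕ) (z : R) (n : ℕ) :
    homSum c 1 (-z) n = ∑ k ∈ range (n + 1), (-1) ^ k * (c n k : R) * z ^ k := by
  refine sum_congr rfl fun k _ ↦ ?_
  rw [neg_pow, one_pow]
  ring

lemma homSum_mul_one (c : ℕ → ℕ → ℕ) (x z : R) (n : ℕ) :
    homSum c (x * z) 1 n = ∑ k ∈ range (n + 1), x ^ k * (c n (n - k) : R) * z ^ k := by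
  rw [homSum_reflect]
  refine sum_congr rfl fun k _ ↦ ?_
  rw [mul_pow, one_pow]
  ring

lemma homSum_legendreCoeff_add (hprime : (2 * n + 1).Prime) (hp : (2 * (n : R) + 1) ^ 2 = 0)
    (z : R) :
    homSum legendreCoeff (-z) 1 n + n.centralBinom * homSum legendreCoeff 1 (-z) n
      = 2 * centralBinomConv z n := by
  rw [homSum_one_neg, ← neg_one_mul z, homSum_mul_one, centralBinomConv, mul_sum, mul_sum,
    ← sum_add_distrib]
  refine sum_congr rfl fun k hk ↦ ?_
  have hk := Nat.lt_succ_iff.1 (mem_range.1 hk)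
  rw [legendreCoeff_sub_eq hprime hp hk, centralBinom_mul_centralBinom_sub_eq hprime hp hk]
  ring

lemma dvd_centralBinomConv_sub (hprime : (2 * n + 1).Prime) (hp : (2 * (n : R) + 1) ^ 2 = 0)
    (z : R) :
    2 * (n : R) + 1 ∣ centralBinomConv z n - n.centralBinom * homSum legendreCoeff 1 (-z) n := by
  rw [homSum_one_neg, centralBinomConv, mul_sum, ← sum_sub_distrib]
  refine dvd_sum fun k hk ↦ ?_
  rw [centralBinom_mul_centralBinom_sub_eq hprime hp (Nat.lt_succ_iff.1 (mem_range.1 hk))]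
  exact ⟨n.centralBinom * ((-1) ^ k * legendreCoeff n k) * (evenHarmonic R k - oddHarmonic R k)
    * z ^ k, by ring⟩

lemma four_pow_mul_homSum_trinomialCoeff (hprime : (2 * n + 1).Prime)
    (hp : (2 * (n : R) + 1) ^ 2 = 0) (z : R) :
    4 ^ n * homSum trinomialCoeff (-4 * z) 1 n
      = 4 ^ n * centralBinomConv z n + n.centralBinom * centralBinomConv (1 - z) n
        - 4 ^ n * (n.centralBinom * homSum legendreCoeff 1 (-z) n) := by
  rw [← homSum_trinomialCoeff_four_neg, homSum_mul_one, homSum_one_neg, centralBinomConv, homSum]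
  simp only [mul_sum, ← sum_add_distrib, ← sum_sub_distrib]
  refine sum_congr rfl fun k hk ↦ ?_
  have hk := Nat.lt_succ_iff.1 (mem_range.1 hk)
  rw [trinomialCoeff_sub_eq hprime hp hk, centralBinom_mul_centralBinom_sub_eq hprime hp hk,
    neg_pow z, ← mul_assoc (_ * _) _ (z ^ k), trinomialCoeff_mul_four_pow_sub_eq hprime hp hk]
  ring

lemma neg_one_pow_mul_centralBinom (hprime : (2 * n + 1).Prime)
    (hp : (2 * (n : R) + 1) ^ 2 = 0) : (-1) ^ n * (n.centralBinom : R) = 2 * 4 ^ n - 1 := by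
  have h := homSum_legendreCoeff_add hprime hp 1
  rw [homSum_legendreCoeff_neg_one_one, homSum_legendreCoeff_one_neg_one,
    centralBinomConv_one] at h
  linear_combination h

lemma homSum_legendreSqCoeff_one_neg (hprime : (2 * n + 1).Prime)
    (hp : (2 * (n : R) + 1) ^ 2 = 0) :
    homSum legendreSqCoeff (1 : R) (-16) n = ∑ k ∈ range (n + 1), (k.centralBinom : R) ^ 3 := by
  rw [homSum_one_neg]
  refine sum_congr rfl fun k hk ↦ ?_
  rw [pow_succ _ 2, centralBinom_sq_eq hprime hp (Nat.lt_succ_iff.1 (mem_range.1 hk)),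
    legendreSqCoeff]
  push_cast
  ring

lemma homSum_legendreSqCoeff_neg_one (hprime : (2 * n + 1).Prime)
    (hp : (2 * (n : R) + 1) ^ 2 = 0) :
    homSum legendreSqCoeff (-256 : R) 1 n = ∑ k ∈ range (n + 1), (n.centralBinom : R) ^ 2
      * (k.centralBinom ^ 3 * (1 - 3 * (2 * n + 1) * ∑ j ∈ Icc 1 k, ((k + j : ℕ) : R)⁻¹ʳ)) := by
  rw [homSum_reflect]
  refine sum_congr rfl fun k hk ↦ ?_
  have hk := Nat.lt_succ_iff.1 (mem_range.1 hk)
  apply (isUnit_centralBinom hprime hp hk).mul_left_cancel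
  rw [sum_Icc_inverse_add hprime hp hk, legendreSqCoeff, one_pow,
    show (-256 : R) = -1 * (16 * 16) by norm_num, mul_pow, mul_pow]
  push_cast
  set B : R := (n.centralBinom : R)
  set b : R := (k.centralBinom : R)
  set H : R := evenHarmonic R k - oddHarmonic R k
  calc b * (legendreCoeff n (n - k) * (n - k).centralBinom * ((-1) ^ k * (16 ^ k * 16 ^ k)) * 1)
    _ = (-1) ^ k * legendreCoeff n (n - k) * (b * (n - k).centralBinom) * (16 ^ k * 16 ^ k) := by
      ring
    _ = B ^ 2 * ((-1) ^ k * legendreCoeff n k * 16 ^ k) ^ 2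
        * ((1 + 2 * (2 * n + 1) * H) * (1 + (2 * n + 1) * H)) := by
      rw [legendreCoeff_sub_eq hprime hp hk, centralBinom_mul_centralBinom_sub_eq hprime hp hk]
      ring
    _ = B ^ 2 * b ^ 4 * ((1 + 2 * (2 * n + 1) * H) * (1 + (2 * n + 1) * H)) := by
      rw [← centralBinom_sq_eq hprime hp hk]
      ring
    _ = b * (B ^ 2 * (b ^ 3 * (1 - 3 * (2 * n + 1) * (oddHarmonic R k - evenHarmonic R k)))) := by
      linear_combination 2 * B ^ 2 * b ^ 4 * H ^ 2 * hp

end Relations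

section ComplexMultiplication

variable {R : Type*} [CommRing R] {n : ℕ} {k : R}

lemma mul_eq_zero_of_dvd_of_dvd {p x y : R} (hp : p ^ 2 = 0) (hx : p ∣ x) (hy : p ∣ y) :
    x * y = 0 :=
  zero_dvd_iff.1 (hp ▸ sq p ▸ mul_dvd_mul hx hy)

-- Landen's transformation at `z = k` returns to the argument `k ^ 2`, as
-- `(1 + k) ^ 2 * k ^ 2 = 4 * k`.
lemma one_add_pow_mul_homSum_legendreCoeff (hk : k ^ 2 + 3 * k + 4 = 0) (n : ℕ) :
    (1 + k) ^ (2 * n) * homSum legendreCoeff (-k ^ 2) 1 n = centralBinomConv (k ^ 2) n := by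
  rw [← homSum_legendreCoeff_landen, pow_mul, ← homSum_mul_mul, mul_one]
  congr 1
  linear_combination (-k ^ 2 + k : R) * hk

-- The `p`-th power map applied to `2 * (1 + k) = (2 * k + 3) - 1`, where `(2 * k + 3) ^ 2 = -7`.
lemma dvd_two_mul_one_add_pow_sub (hprime : (2 * n + 1).Prime) (hk : k ^ 2 + 3 * k + 4 = 0) :
    2 * (n : R) + 1 ∣ 2 * ((1 + k) * (1 + k) ^ (2 * n)) - ((-7) ^ n * (2 * k + 3) - 1) := by
  obtain ⟨r, hr⟩ := exists_add_pow_prime_eq hprime (2 * k + 3) (-1)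
  obtain ⟨s, hs⟩ := exists_add_pow_prime_eq hprime (1 : R) 1
  have hsum : (2 * k + 3 + -1) ^ (2 * n + 1)
      = (1 + 1) ^ (2 * n + 1) * ((1 + k) * (1 + k) ^ (2 * n)) := by
    rw [← pow_succ', ← mul_pow]
    congr 1
    ring
  have hsqrt : (2 * k + 3) ^ (2 * n + 1) = (-7) ^ n * (2 * k + 3) := by
    rw [pow_succ, pow_mul]
    congr 2
    linear_combination 4 * hk
  rw [hsum, hs, hsqrt, (odd_two_mul_add_one n).neg_one_pow] at hr
  push_cast at hr
  simp only [one_pow] at hr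
  refine ⟨-(2 * k + 3) * r - s * ((1 + k) * (1 + k) ^ (2 * n)), ?_⟩
  linear_combination hr

lemma dvd_neg_seven_pow_sub_or_add (hprime : (2 * n + 1).Prime) (h7 : 2 * n + 1 ≠ 7) :
    2 * (n : R) + 1 ∣ (-7) ^ n - 1 ∨ 2 * (n : R) + 1 ∣ (-7) ^ n + 1 := by
  have : Fact (2 * n + 1).Prime := ⟨hprime⟩
  have hz (m : ℤ) (h : (m : ZMod (2 * n + 1)) = 0) : 2 * (n : R) + 1 ∣ m := by
    simpa using map_dvd (Int.castRingHom R) ((ZMod.intCast_zmod_eq_zero_iff_dvd m _).1 h)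
  have hne : (-7 : ZMod (2 * n + 1)) ≠ 0 := by
    rw [neg_ne_zero]
    exact_mod_cast mt ((ZMod.natCast_eq_zero_iff 7 _).1)
      (mt (Nat.prime_dvd_prime_iff_eq hprime (by norm_num)).1 h7)
  have h := ZMod.pow_div_two_eq_neg_one_or_one _ hne
  rw [show (2 * n + 1) / 2 = n by omega] at h
  rcases h with h | h
  · exact Or.inl (by simpa using hz ((-7) ^ n - 1) (by simp [h]))
  · exact Or.inr (by simpa using hz ((-7) ^ n + 1) (by simp [h]))

lemma dvd_one_add_pow_sub_one (hprime : (2 * n + 1).Prime) (hp : (2 * (n : R) + 1) ^ 2 = 0)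
    (hk : k ^ 2 + 3 * k + 4 = 0) (hord : 2 * (n : R) + 1 ∣ (-7) ^ n - 1) :
    2 * (n : R) + 1 ∣ (1 + k) ^ (2 * n) - 1 := by
  rw [← (isUnit_four hprime hp).dvd_mul_left]
  obtain ⟨x, hx⟩ := dvd_two_mul_one_add_pow_sub hprime hk
  obtain ⟨c, hc⟩ := hord
  refine ⟨(-2 - k) * (x + (2 * k + 3) * c), ?_⟩
  linear_combination (-2 - k) * hx + (-2 - k) * (2 * k + 3) * hc
    + 2 * ((1 + k) ^ (2 * n) - 1) * hk

lemma centralBinomConv_sq_eq_of_dvd_sub (hprime : (2 * n + 1).Prime)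
    (hp : (2 * (n : R) + 1) ^ 2 = 0) (hk : k ^ 2 + 3 * k + 4 = 0)
    (hord : 2 * (n : R) + 1 ∣ (-7) ^ n - 1) :
    centralBinomConv (k ^ 2) n = (2 - (1 + k) ^ (2 * n))
      * (n.centralBinom * homSum legendreCoeff 1 (-k ^ 2) n) := by
  have hα := dvd_one_add_pow_sub_one hprime hp hk hord
  have hα2 := mul_eq_zero_of_dvd_of_dvd hp hα hα
  have h1 := one_add_pow_mul_homSum_legendreCoeff hk n
  have h2 := homSum_legendreCoeff_add hprime hp (k ^ 2)
  set α := (1 + k) ^ (2 * n)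
  set D := centralBinomConv (k ^ 2) n
  set g := (n.centralBinom : R) * homSum legendreCoeff 1 (-k ^ 2) n
  linear_combination (3 - 2 * α) * (h1 - α * h2) + (4 * D - 2 * g) * hα2

lemma homSum_trinomialCoeff_eq_of_dvd_sub (hprime : (2 * n + 1).Prime)
    (hp : (2 * (n : R) + 1) ^ 2 = 0) (hk : k ^ 2 + 3 * k + 4 = 0)
    (hord : 2 * (n : R) + 1 ∣ (-7) ^ n - 1) :
    homSum trinomialCoeff (-4 * k ^ 2) 1 n
      = n.centralBinom * homSum legendreCoeff 1 (-k ^ 2) n := by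
  obtain ⟨conj, hconj⟩ : ∃ conj, conj = -3 - k := ⟨_, rfl⟩
  have hroot : conj ^ 2 + 3 * conj + 4 = 0 := by
    rw [hconj]
    linear_combination hk
  have hsq : conj ^ 2 = 1 - k ^ 2 := by
    rw [hconj]
    linear_combination 2 * hk
  have hnorm : (1 + k) ^ (2 * n) * (1 + conj) ^ (2 * n) = 4 ^ n := by
    rw [← mul_pow, pow_mul, hconj]
    congr 1
    linear_combination (k ^ 2 + 3 * k) * hk
  have hα := dvd_one_add_pow_sub_one hprime hp hk hord
  have hβ := dvd_one_add_pow_sub_one hprime hp hroot hord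
  have hα2 := mul_eq_zero_of_dvd_of_dvd hp hα hα
  have hαβ := mul_eq_zero_of_dvd_of_dvd hp hα hβ
  have hβ2 := mul_eq_zero_of_dvd_of_dvd hp hβ hβ
  have hD := centralBinomConv_sq_eq_of_dvd_sub hprime hp hk hord
  have hD' := centralBinomConv_sq_eq_of_dvd_sub hprime hp hroot hord
  rw [hsq, homSum_legendreCoeff_neg_one_sub] at hD'
  have hT := four_pow_mul_homSum_trinomialCoeff hprime hp (k ^ 2)
  have hB := neg_one_pow_mul_centralBinom hprime hp
  rw [hD, hD'] at hT
  apply ((isUnit_four hprime hp).pow n).mul_left_cancel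
  set α := (1 + k) ^ (2 * n)
  set β := (1 + conj) ^ (2 * n)
  set g := (n.centralBinom : R) * homSum legendreCoeff 1 (-k ^ 2) n
  linear_combination hT + (2 - β) * g * hB + g * (4 - α - 2 * β) * (hαβ - hnorm)
    - g * (hα2 + 3 * hαβ + 2 * hβ2)

lemma dvd_centralBinom_mul_homSum_of_dvd_add (hprime : (2 * n + 1).Prime)
    (hp : (2 * (n : R) + 1) ^ 2 = 0) (h7 : 2 * n + 1 ≠ 7) (hk : k ^ 2 + 3 * k + 4 = 0)
    (hss : 2 * (n : R) + 1 ∣ (-7) ^ n + 1) :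
    2 * (n : R) + 1 ∣ n.centralBinom * homSum legendreCoeff 1 (-k ^ 2) n := by
  have h14 : IsUnit (2 * 7 : R) := (isUnit_two hprime hp).mul <| by
    exact_mod_cast isUnit_natCast_of_coprime (p := 2 * n + 1) (m := 7) (by exact_mod_cast hp)
      ((Nat.coprime_primes (by norm_num) hprime).2 h7.symm)
  rw [← h14.dvd_mul_left]
  obtain ⟨c, hc⟩ := hss
  obtain ⟨x, hx⟩ := dvd_two_mul_one_add_pow_sub hprime hk
  obtain ⟨X, hX⟩ := dvd_centralBinomConv_sub hprime hp (k ^ 2)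
  have h1 := one_add_pow_mul_homSum_legendreCoeff hk n
  have h2 := homSum_legendreCoeff_add hprime hp (k ^ 2)
  set P : R := 2 * (n : R) + 1
  set α := (1 + k) ^ (2 * n)
  set Q := homSum legendreCoeff (-k ^ 2) 1 n
  set g := (n.centralBinom : R) * homSum legendreCoeff 1 (-k ^ 2) n
  refine ⟨(2 * k + 3) * (2 * (1 + k) * X + 2 * (2 * k + 4) * X
    - (x + (2 * k + 3) * c) * (g + 2 * P * X)), ?_⟩
  linear_combination (2 * k + 3) * (2 * (1 + k) * h1 - Q * (hx + (2 * k + 3) * hc)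
    - (-(2 * k + 4) + P * (x + (2 * k + 3) * c)) * h2
    - (2 * (-(2 * k + 4) + P * (x + (2 * k + 3) * c)) - 2 * (1 + k)) * hX) + 8 * g * hk

lemma dvd_homSum_trinomialCoeff_of_dvd_add (hprime : (2 * n + 1).Prime)
    (hp : (2 * (n : R) + 1) ^ 2 = 0) (h7 : 2 * n + 1 ≠ 7) (hk : k ^ 2 + 3 * k + 4 = 0)
    (hss : 2 * (n : R) + 1 ∣ (-7) ^ n + 1) :
    2 * (n : R) + 1 ∣ homSum trinomialCoeff (-4 * k ^ 2) 1 n := by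
  have hg := dvd_centralBinom_mul_homSum_of_dvd_add hprime hp h7 hk hss
  have hD : 2 * (n : R) + 1 ∣ centralBinomConv (k ^ 2) n :=
    (dvd_iff_dvd_of_dvd_sub (dvd_centralBinomConv_sub hprime hp (k ^ 2))).2 hg
  have hD' : 2 * (n : R) + 1 ∣ centralBinomConv (1 - k ^ 2) n := by
    refine (dvd_iff_dvd_of_dvd_sub (dvd_centralBinomConv_sub hprime hp (1 - k ^ 2))).2 ?_
    rw [homSum_legendreCoeff_neg_one_sub, mul_left_comm]
    exact hg.mul_left _
  rw [← ((isUnit_four hprime hp).pow n).dvd_mul_left, four_pow_mul_homSum_trinomialCoeff hprime hp]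
  exact ((hD.mul_left _).add (hD'.mul_left _)).sub (hg.mul_left _)

lemma homSum_trinomialCoeff_sq_eq (hprime : (2 * n + 1).Prime) (hp : (2 * (n : R) + 1) ^ 2 = 0)
    (h7 : 2 * n + 1 ≠ 7) (hk : k ^ 2 + 3 * k + 4 = 0) :
    homSum trinomialCoeff (-4 * k ^ 2) 1 n ^ 2
      = (n.centralBinom * homSum legendreCoeff 1 (-k ^ 2) n) ^ 2 := by
  rcases dvd_neg_seven_pow_sub_or_add (R := R) hprime h7 with hord | hss
  · rw [homSum_trinomialCoeff_eq_of_dvd_sub hprime hp hk hord]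
  · have hT := dvd_homSum_trinomialCoeff_of_dvd_add hprime hp h7 hk hss
    have hL := dvd_centralBinom_mul_homSum_of_dvd_add hprime hp h7 hk hss
    linear_combination mul_eq_zero_of_dvd_of_dvd hp hT hT - mul_eq_zero_of_dvd_of_dvd hp hL hL

end ComplexMultiplication

section HarmonicSum

open scoped Ring

/-- The sum `∑ m = 1, …, n` of `(2m choose m) ^ 3 * (1 / (m + 1) + ⋯ + 1 / (2 * m))`. It is stated
with `Ring.inverse` because it is transported between `ℚ_[p]`, `ℤ_[p]` and rings in which
`p ^ 2 = 0`. -/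
noncomputable def centralBinomHarmonicSum (R : Type*) [CommRing R] (n : ℕ) : R :=
  ∑ m ∈ Icc 1 n, (m.centralBinom : R) ^ 3 * ∑ j ∈ Icc 1 m, ((m + j : ℕ) : R)⁻¹ʳ

variable {R S : Type*} [CommRing R] [CommRing S] {n : ℕ}

lemma map_ringInverse_of_isUnit (φ : R →+* S) {x : R} (hx : IsUnit x) : φ x⁻¹ʳ = (φ x)⁻¹ʳ := by
  apply (hx.map φ).mul_left_cancel
  rw [← map_mul, Ring.mul_inverse_cancel _ hx, Ring.mul_inverse_cancel _ (hx.map φ), map_one]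

lemma map_centralBinomHarmonicSum (φ : R →+* S)
    (hunit : ∀ m : ℕ, m ≠ 0 → m < 2 * n + 1 → IsUnit (m : R)) :
    φ (centralBinomHarmonicSum R n) = centralBinomHarmonicSum S n := by
  simp only [centralBinomHarmonicSum, map_sum, map_mul, map_pow, map_natCast]
  refine sum_congr rfl fun m hm ↦ congrArg _ (sum_congr rfl fun j hj ↦ ?_)
  rw [mem_Icc] at hm hj
  rw [map_ringInverse_of_isUnit φ (hunit _ (by omega) (by omega)), map_natCast]

lemma centralBinomHarmonicSum_eq_sum_range (R : Type*) [CommRing R] (n : ℕ) :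
    centralBinomHarmonicSum R n = ∑ m ∈ range (n + 1), (m.centralBinom : R) ^ 3
      * ∑ j ∈ Icc 1 m, ((m + j : ℕ) : R)⁻¹ʳ := by
  simp [centralBinomHarmonicSum, sum_range_eq_add_Ico, ← Ico_add_one_right_eq_Icc]

lemma two_mul_add_one_mul_centralBinomHarmonicSum (hprime : (2 * n + 1).Prime)
    (hp : (2 * (n : R) + 1) ^ 2 = 0) (hn : 2 ≤ n) (h7 : 2 * n + 1 ≠ 7) {k : R}
    (hk : k ^ 2 + 3 * k + 4 = 0) : (2 * (n : R) + 1) * centralBinomHarmonicSum R n = 0 := by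
  have h3 : IsUnit (3 : R) := by
    exact_mod_cast isUnit_natCast_of_lt hprime hp three_ne_zero (by omega)
  have hB := (isUnit_centralBinom hprime hp le_rfl).pow 2
  have hz : (k ^ 2) ^ 2 - k ^ 2 = -16 := by linear_combination (k ^ 2 - 3 * k + 4) * hk
  have h := homSum_trinomialCoeff_sq_eq hprime hp h7 hk
  rw [homSum_trinomialCoeff_sq, mul_pow, homSum_legendreCoeff_sq, hz,
    show (16 * -16 : R) = -256 by norm_num, homSum_legendreSqCoeff_neg_one hprime hp,
    homSum_legendreSqCoeff_one_neg hprime hp, ← mul_sum] at h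
  have hsum := hB.mul_left_cancel h
  simp only [mul_sub, mul_one, sum_sub_distrib, sub_eq_self] at hsum
  apply h3.mul_left_cancel
  rw [mul_zero, ← hsum, centralBinomHarmonicSum_eq_sum_range, ← mul_assoc, mul_sum]
  exact sum_congr rfl fun m _ ↦ mul_left_comm _ _ _

end HarmonicSum

section Padic

open scoped QuadraticAlgebra

lemma omega_sq_add_three_mul_add_four (R : Type*) [CommRing R] :
    (ω : QuadraticAlgebra R (-4) (-3)) ^ 2 + 3 * ω + 4 = 0 := by
  rw [sq, QuadraticAlgebra.omega_mul_omega_eq_add]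
  ext <;> simp

variable {p n : ℕ} [Fact p.Prime]

lemma isUnit_natCast_padicInt {m : ℕ} (h0 : m ≠ 0) (hm : m < p) : IsUnit (m : ℤ_[p]) := by
  rw [PadicInt.isUnit_iff, PadicInt.norm_natCast_eq_one_iff]
  exact Nat.coprime_of_lt_prime h0 hm Fact.out

lemma natCast_dvd_centralBinomHarmonicSum (hpn : p = 2 * n + 1) (hn : 2 ≤ n) (h7 : p ≠ 7) :
    (p : ℤ_[p]) ∣ centralBinomHarmonicSum ℤ_[p] n := by
  let A := QuadraticAlgebra (ZMod (p ^ 2)) (-4) (-3)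
  let φ : ℤ_[p] →+* A := (algebraMap (ZMod (p ^ 2)) A).comp (PadicInt.toZModPow 2)
  have hker {x : ℤ_[p]} (hx : φ x = 0) : (p : ℤ_[p]) ^ 2 ∣ x := by
    rw [← Ideal.mem_span_singleton, ← PadicInt.ker_toZModPow]
    exact QuadraticAlgebra.algebraMap_injective (hx.trans (map_zero _).symm)
  have hcast : (p : A) = 2 * n + 1 := by exact_mod_cast congrArg (Nat.cast : ℕ → A) hpn
  have hp : (2 * (n : A) + 1) ^ 2 = 0 := by
    rw [← hcast, ← Nat.cast_pow, ← map_natCast (algebraMap (ZMod (p ^ 2)) A), ZMod.natCast_self,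
      map_zero]
  rw [← mul_dvd_mul_iff_left (Nat.cast_ne_zero.2 (NeZero.ne p)), ← sq]
  apply hker
  rw [map_mul, map_natCast, hcast, map_centralBinomHarmonicSum φ fun m h0 hm ↦
    isUnit_natCast_padicInt h0 (hpn ▸ hm)]
  exact two_mul_add_one_mul_centralBinomHarmonicSum (hpn ▸ Fact.out) hp hn (hpn ▸ h7)
    (omega_sq_add_three_mul_add_four _)

lemma norm_centralBinomHarmonicSum_le (hpn : p = 2 * n + 1) (hn : 2 ≤ n) (h7 : p ≠ 7) :
    ‖centralBinomHarmonicSum ℚ_[p] n‖ ≤ (p : ℝ) ^ (-1 : ℤ) := by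
  rw [← map_centralBinomHarmonicSum PadicInt.Coe.ringHom fun m h0 hm ↦
    isUnit_natCast_padicInt h0 (hpn ▸ hm)]
  have h := (PadicInt.norm_le_pow_iff_mem_span_pow (centralBinomHarmonicSum ℤ_[p] n) 1).2 <| by
    rw [pow_one, Ideal.mem_span_singleton]
    exact natCast_dvd_centralBinomHarmonicSum hpn hn h7
  exact_mod_cast h

lemma norm_centralBinomHarmonicSum_seven [Fact (Nat.Prime 7)] :
    ‖centralBinomHarmonicSum ℚ_[7] 3‖ ≤ (7 : ℝ) ^ (-1 : ℤ) := by
  have heq : centralBinomHarmonicSum ℚ_[7] 3 = 7 * (2170 : ℤ) / (3 : ℕ) := by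
    norm_num [centralBinomHarmonicSum, Ring.inverse_eq_inv, sum_Icc_succ_top, Nat.centralBinom,
      Nat.choose]
  have h3 : ‖((3 : ℕ) : ℚ_[7])‖ = 1 := Padic.norm_natCast_eq_one_iff.2 (by norm_num)
  have h7 : ‖(7 : ℚ_[7])‖ = 7⁻¹ := by simpa using Padic.norm_p (p := 7)
  rw [heq, norm_div, norm_mul, h3, h7, div_one, zpow_neg_one]
  exact mul_le_of_le_one_right (by norm_num) (Padic.norm_int_le_one 2170)

end Padic

theorem stmt5 (p : ℕ) [Fact p.Prime] (hp : 3 < p) :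
    ‖((∑ i ∈ Icc 1 ((p - 1) / 2),
          (Nat.choose (2 * i) i : ℚ) ^ 3 * ∑ j ∈ Icc 1 i, (1 : ℚ) / (i + j)) : ℚ_[p])‖
      ≤ (p : ℝ) ^ (-1 : ℤ) := by
  obtain ⟨n, hn⟩ := (Fact.out : p.Prime).odd_of_ne_two (by omega)
  have hsum : ∑ i ∈ Icc 1 ((p - 1) / 2), ((Nat.choose (2 * i) i : ℚ) : ℚ_[p]) ^ 3
      * ((∑ j ∈ Icc 1 i, (1 : ℚ) / (i + j) : ℚ) : ℚ_[p]) = centralBinomHarmonicSum ℚ_[p] n := by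
    rw [show (p - 1) / 2 = n by omega]
    simp [centralBinomHarmonicSum, Ring.inverse_eq_inv, Nat.centralBinom]
  rw [hsum]
  rcases eq_or_ne p 7 with rfl | h7
  · obtain rfl : n = 3 := by omega
    exact_mod_cast norm_centralBinomHarmonicSum_seven
  · exact norm_centralBinomHarmonicSum_le hn (by omega) h7
end

section
/- Let λ ∈ {−8, −1/8, 4, 1/4, 64, 1/64, −1} (the rational values for which E_λ has complex multiplication) and let p be a prime with p > 3 such that λ ∈ ℤ_p, λ ≢ 0 (mod p) and λ ≢ 1 (mod p). Then Σ_{i=0}^{(p−1)/2} C(2i,i)³ (λ/64)^i · ( 6(H_{2i} − H_i) + ((λ/64)^{p−1} − 1)/p ) ≡ 0 (mod p ℤ_p). -/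
open Finset

/-- The harmonic sum `H_k = ∑_{j=1}^k 1/j`. -/
def harmonicSum (k : ℕ) : ℚ := ∑ j ∈ Icc 1 k, (1 : ℚ) / j

/-!
Write `p = 2n + 1`, `S_r(y) = ∑ C(n,i)^r y^i`, and let `D_r(y)` be its formal derivative in the
index `i`, with the Fermat quotient `q(y)` in place of `log y`; the sum in question reduces to
`D_3(-λ)`. Modulo `p`, `S_2(s)` and `S_3(-4u)` are the values `P_n(s)` and `F_n(u)` of the shifted
Legendre and Clausen polynomials, and `P_m(s)² = F_m(s(1 - s))` over `ℤ`. Moreover, modulo `p²`,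
`P_{n+p}(s) ≡ (1 - 2s) P_n(s) - 2ps D_2(s)` and `F_{n+p}(u) ≡ (1 - 4u) F_n(u) - 4pu D_3(-4u)`.
Comparing the two gives `s(1 - s) D_3(-4s(1 - s)) = (1 - 2s) T(s)` with `T = s S_2 D_2`.

Let `s(1 - s) = λ/4`. If `s` is `p`-adic, then the behaviour of `T` under `s ↦ 1 - s` and
`s ↦ 1/s`, and of `D_3` under `y ↦ 1/y`, forces `T(s) = 0` when `λ` is `-8`, `4` or `64`. If `s` is
not `p`-adic, the same symmetries of `S_2` and `S_3` give `S_3(-λ) = 0`; as `F_m(u)` is always a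
square up to a factor `1 - 4u`, both `F_n(u)` and `F_{n+p}(u)` are then divisible by `p²`, and
`D_3(-λ) = 0` again. The value `λ = -1` and the inverse values follow from `y ↦ 1/y`.
-/

section Clausen

open Polynomial

/-- The Euler operator `X · d/dX`, which multiplies the `k`-th coefficient by `k` and so turns
hypergeometric coefficient recurrences into differential equations. -/
noncomputable def euler (f : ℤ[X]) : ℤ[X] := X * derivative f

theorem coeff_euler (f : ℤ[X]) (k : ℕ) : (euler f).coeff k = k * f.coeff k := by
  cases k with
  | zero => simp [euler]
  | succ k => rw [euler, coeff_X_mul, coeff_derivative]; push_cast; ring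

theorem coeff_shiftedLegendre_eq_mul_choose (m k : ℕ) :
    (shiftedLegendre m).coeff k = (-1) ^ k * m.choose k * (m + k).choose k := by
  rw [coeff_shiftedLegendre, Nat.choose_symm_add]

theorem succ_sq_mul_coeff_shiftedLegendre_succ (m k : ℕ) :
    ((k : ℤ) + 1) ^ 2 * (shiftedLegendre m).coeff (k + 1) =
      ((k : ℤ) * (k + 1) - m * (m + 1)) * (shiftedLegendre m).coeff k := by
  have h1 : ((m.choose (k + 1) : ℕ) : ℤ) * (k + 1) = m.choose k * (m - k) := by
    rcases le_or_gt k m with h | h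
    · have := Nat.choose_succ_right_eq m k
      zify [h] at this
      exact this
    · simp [Nat.choose_eq_zero_of_lt h, Nat.choose_eq_zero_of_lt (Nat.lt_succ_of_lt h)]
  have h2 : (((m + (k + 1)).choose (k + 1) : ℕ) : ℤ) * (k + 1) =
      (m + k + 1) * (m + k).choose k := by
    have := Nat.add_one_mul_choose_eq (m + k) k
    zify at this
    rw [← add_assoc, ← this]
  simp only [coeff_shiftedLegendre_eq_mul_choose, pow_succ]
  linear_combination -(-1) ^ k * ((m + (k + 1)).choose (k + 1) : ℤ) * (k + 1) * h1 -
    (-1) ^ k * (m.choose k : ℤ) * (m - k) * h2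

/-- The polynomial `∑ C(2k,k) C(m,k) C(m+k,k) (-X)^k`, a terminating `₃F₂`, whose value at
`X(1 - X)` is the square of the shifted Legendre polynomial by Clausen's formula. -/
noncomputable def clausenPoly (m : ℕ) : ℤ[X] :=
  ∑ k ∈ range (m + 1), C (k.centralBinom * (shiftedLegendre m).coeff k) * X ^ k

theorem coeff_shiftedLegendre_eq_zero {m k : ℕ} (h : m < k) : (shiftedLegendre m).coeff k = 0 := by
  simp [coeff_shiftedLegendre, Nat.choose_eq_zero_of_lt h]

theorem coeff_clausenPoly (m k : ℕ) :
    (clausenPoly m).coeff k = k.centralBinom * (shiftedLegendre m).coeff k := by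
  simp only [clausenPoly, finsetSum_coeff, coeff_C_mul_X_pow]
  simp +contextual [coeff_shiftedLegendre_eq_zero]

theorem shiftedLegendre_ode (m : ℕ) :
    X * (1 - X) * derivative (derivative (shiftedLegendre m))
      + (1 - 2 * X) * derivative (shiftedLegendre m)
      + C ((m : ℤ) * (m + 1)) * shiftedLegendre m = 0 := by
  have key : euler (euler (shiftedLegendre m)) =
      X * (euler (euler (shiftedLegendre m)) + euler (shiftedLegendre m)
        - C ((m : ℤ) * (m + 1)) * shiftedLegendre m) := by
    ext k
    cases k with
    | zero => simp [coeff_euler]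
    | succ k =>
      simp only [coeff_X_mul, coeff_euler, coeff_sub, coeff_add, coeff_C_mul]
      push_cast
      linear_combination succ_sq_mul_coeff_shiftedLegendre_succ m k
  apply mul_left_cancel₀ (X_ne_zero (R := ℤ))
  simp only [euler, derivative_mul, derivative_X] at key
  linear_combination key

theorem clausenPoly_ode (m : ℕ) :
    X ^ 2 * (1 - 4 * X) * derivative (derivative (derivative (clausenPoly m)))
      + (3 * X - 18 * X ^ 2) * derivative (derivative (clausenPoly m))
      + (1 + (4 * C ((m : ℤ) * (m + 1)) - 12) * X) * derivative (clausenPoly m)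
      + 2 * C ((m : ℤ) * (m + 1)) * clausenPoly m = 0 := by
  have key : euler (euler (euler (clausenPoly m))) =
      X * (C 4 * euler (euler (euler (clausenPoly m))) + C 6 * euler (euler (clausenPoly m))
        + C (2 - 4 * ((m : ℤ) * (m + 1))) * euler (clausenPoly m)
        - C (2 * ((m : ℤ) * (m + 1))) * clausenPoly m) := by
    ext k
    cases k with
    | zero => simp [coeff_euler]
    | succ k =>
      have h := Nat.succ_mul_centralBinom_succ k
      zify at h
      simp only [coeff_X_mul, coeff_euler, coeff_sub, coeff_add, coeff_C_mul, coeff_clausenPoly]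
      push_cast
      linear_combination (k + 1) * ((k + 1).centralBinom : ℤ) *
        succ_sq_mul_coeff_shiftedLegendre_succ m k + (shiftedLegendre m).coeff k *
          (k * (k + 1) - (m : ℤ) * (m + 1)) * h
  apply mul_left_cancel₀ (X_ne_zero (R := ℤ))
  simp only [euler, derivative_mul, derivative_X, C_mul, C_sub, derivative_add,
    derivative_one, map_ofNat] at key
  simp only [C_mul]
  linear_combination key

/-- The indicial equation at `0` of the third order equation satisfied by the squares of the
shifted Legendre polynomials has `0` as a triple root, so a solution is determined by its constant
term. -/
theorem eq_zero_of_symmetricSquare_ode {M : ℤ} {f : ℤ[X]} (h0 : f.coeff 0 = 0)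
    (h : (X * (1 - X)) ^ 2 * derivative (derivative (derivative f))
      + 3 * (X * (1 - X)) * (1 - 2 * X) * derivative (derivative f)
      + ((1 - 2 * X) ^ 2 - 2 * (X * (1 - X)) + 4 * C M * (X * (1 - X))) * derivative f
      + 2 * C M * (1 - 2 * X) * f = 0) : f = 0 := by
  have key : euler (euler (euler f - X * euler f) - X * euler (euler f - X * euler f)) =
      X * (X * (C (4 * M) * euler f + C (4 * M) * f) - (C (4 * M) * euler f + C (2 * M) * f)) := by
    simp only [euler, derivative_mul, derivative_X, derivative_add, derivative_sub, C_mul,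
      derivative_one, map_ofNat]
    linear_combination X * h
  ext k
  induction k using Nat.strong_induction_on with
  | _ k ih =>
    rcases k with - | - | k
    · simpa using h0
    · have := congrArg (coeff · (0 + 1)) key
      simpa [coeff_euler, coeff_X_mul, h0, -zero_add] using this
    · have := congrArg (coeff · (k + 2)) key
      have h1 := ih k (by omega)
      have h2 := ih (k + 1) (by omega)
      simp only [coeff_euler, coeff_sub, coeff_X_mul, coeff_add, coeff_C_mul, h1, h2, coeff_zero,
        show k + 2 = k + 1 + 1 from rfl] at this
      have hk : ((k : ℤ) + 2) ≠ 0 := by positivity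
      have h3 : ((k : ℤ) + 2) ^ 3 * f.coeff (k + 1 + 1) = 0 := by
        push_cast at this
        linear_combination this
      simpa [hk] using h3

theorem shiftedLegendre_sq (m : ℕ) :
    shiftedLegendre m ^ 2 = (clausenPoly m).comp (X * (1 - X)) := by
  rw [← sub_eq_zero]
  apply eq_zero_of_symmetricSquare_ode (M := (m : ℤ) * (m + 1))
  · have hF : (clausenPoly m).eval 0 = 1 := by
      rw [← coeff_zero_eq_eval_zero, coeff_clausenPoly, coeff_shiftedLegendre]
      simp
    have hP : (shiftedLegendre m).eval 0 = 1 := by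
      rw [← coeff_zero_eq_eval_zero, coeff_shiftedLegendre]
      simp
    simp [coeff_zero_eq_eval_zero, eval_comp, hF, hP]
  · have h1 := shiftedLegendre_ode m
    have h2 := congrArg derivative h1
    have h3 := congrArg (fun f => f.comp (X * (1 - X))) (clausenPoly_ode m)
    simp only [derivative_mul, derivative_X, derivative_add, derivative_sub, derivative_one,
      derivative_zero, derivative_C, derivative_ofNat] at h2
    simp only [add_comp, mul_comp, sub_comp, pow_comp, C_comp, X_comp, one_comp, zero_comp,
      ofNat_comp] at h3
    simp only [derivative_mul, derivative_X, derivative_add, derivative_sub, derivative_one,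
      derivative_zero, pow_two, derivative_comp]
    linear_combination (2 * (X * (1 - X)) * shiftedLegendre m) * h2
      + (6 * (X * (1 - X)) * derivative (shiftedLegendre m)
        + 2 * (1 - 2 * X) * shiftedLegendre m) * h1 - (1 - 2 * X) * h3

variable {R : Type*} [CommRing R]

theorem aeval_shiftedLegendre (m : ℕ) (s : R) :
    aeval s (shiftedLegendre m) =
      ∑ k ∈ range (m + 1), ((shiftedLegendre m).coeff k : R) * s ^ k := by
  rw [aeval_eq_sum_range, natDegree_shiftedLegendre]
  simp only [zsmul_eq_mul]

theorem aeval_clausenPoly (m : ℕ) (u : R) :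
    aeval u (clausenPoly m) =
      ∑ k ∈ range (m + 1),
        (k.centralBinom : R) * ((shiftedLegendre m).coeff k : R) * u ^ k := by
  simp [clausenPoly, map_sum]

theorem aeval_shiftedLegendre_sq (m : ℕ) (s : R) :
    aeval s (shiftedLegendre m) ^ 2 = aeval (s * (1 - s)) (clausenPoly m) := by
  rw [← map_pow, shiftedLegendre_sq, aeval_comp]
  simp

/-- Adjoin a root `ω` of `ω (1 - ω) = u`: since `P_m(ω)² = F_m(u)` has no `ω`-component, `P_m(ω)`
is either in `R` or an `R`-multiple of `1 - 2 ω`. -/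
theorem aeval_clausenPoly_eq_sq_or [IsDomain R] (m : ℕ) (u : R) :
    ∃ a, aeval u (clausenPoly m) = a ^ 2 ∨ aeval u (clausenPoly m) = a ^ 2 * (1 - 4 * u) := by
  let ω : QuadraticAlgebra R (-u) 1 := ⟨0, 1⟩
  have hω : ω * (1 - ω) = algebraMap R _ u := by
    ext <;> simp [ω, QuadraticAlgebra.re_one, QuadraticAlgebra.im_one]
  have h := aeval_shiftedLegendre_sq m ω
  rw [hω, aeval_algebraMap_apply] at h
  set F := aeval ω (shiftedLegendre m)
  have hre : F.re ^ 2 - u * F.im ^ 2 = aeval u (clausenPoly m) := by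
    have := congrArg QuadraticAlgebra.re h
    rw [pow_two, QuadraticAlgebra.re_mul, QuadraticAlgebra.algebraMap_re] at this
    linear_combination this
  have him : F.im * (2 * F.re + F.im) = 0 := by
    have := congrArg QuadraticAlgebra.im h
    rw [pow_two, QuadraticAlgebra.im_mul, QuadraticAlgebra.algebraMap_im] at this
    linear_combination this
  refine ⟨F.re, ?_⟩
  rcases mul_eq_zero.1 him with h0 | h0
  · left
    linear_combination -hre - u * F.im * h0
  · right
    linear_combination -hre - u * (F.im - 2 * F.re) * h0

end Clausen

section CharP

variable {K : Type*} [Field K]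

/-- The harmonic sum `∑_{j=1}^k 1/j` in a field; it is used for `k` less than the characteristic,
as the terms with `j = 0` in the field are junk. -/
def fieldHarmonic (K : Type*) [Field K] (k : ℕ) : K := ∑ j ∈ range k, ((j + 1 : ℕ) : K)⁻¹

/-- The sum `S_r(y) = ∑ C(n,i)^r y^i`; in characteristic `2 n + 1` it is the reduction of the
hypergeometric polynomial with `r` parameters `1/2`. -/
def choosePowSum (n r : ℕ) (y : K) : K := ∑ i ∈ range (n + 1), (n.choose i : K) ^ r * y ^ i

theorem map_choosePowSum {L : Type*} [Field L] (f : K →+* L) (n r : ℕ) (y : K) :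
    f (choosePowSum n r y) = choosePowSum n r (f y) := by
  simp [choosePowSum]

theorem pow_mul_choosePowSum_inv (n r : ℕ) {y : K} (hy : y ≠ 0) :
    y ^ n * choosePowSum n r y⁻¹ = choosePowSum n r y := by
  rw [choosePowSum, ← sum_range_reflect, choosePowSum, mul_sum]
  refine sum_congr rfl fun i hi => ?_
  obtain ⟨k, rfl⟩ := Nat.exists_eq_add_of_le (mem_range_succ_iff.1 hi)
  have h : y ^ k * y⁻¹ ^ k = 1 := by rw [← mul_pow, mul_inv_cancel₀ hy, one_pow]
  rw [show i + k + 1 - 1 - i = k by omega, pow_add, Nat.choose_symm_add]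
  linear_combination ((i + k).choose k : K) ^ r * y ^ i * h

theorem fieldHarmonic_zero : fieldHarmonic K 0 = 0 := by simp [fieldHarmonic]

theorem fieldHarmonic_succ (k : ℕ) :
    fieldHarmonic K (k + 1) = fieldHarmonic K k + ((k : K) + 1)⁻¹ := by
  rw [fieldHarmonic, sum_range_succ, ← fieldHarmonic, Nat.cast_succ]

variable {p n : ℕ} [CharP K p]

theorem natCast_ne_zero_of_lt {j : ℕ} (h0 : 0 < j) (hj : j < p) : (j : K) ≠ 0 := by
  rw [Ne, CharP.cast_eq_zero_iff K p]
  exact Nat.not_dvd_of_pos_of_lt h0 hj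

theorem two_mul_natCast_add_one_eq_zero (hpn : p = 2 * n + 1) : 2 * (n : K) + 1 = 0 := by
  have := CharP.cast_eq_zero K p
  rw [hpn] at this
  exact_mod_cast this

theorem two_ne_zero_of_odd_char (hpn : p = 2 * n + 1) : (2 : K) ≠ 0 := fun h =>
  one_ne_zero (by linear_combination two_mul_natCast_add_one_eq_zero (K := K) hpn - (n : K) * h)

theorem cast_choose_add (hpn : p = 2 * n + 1) {k : ℕ} (hk : k ≤ n) :
    ((n + k).choose k : K) = (-1) ^ k * n.choose k := by
  induction k with
  | zero => simp
  | succ k ih =>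
    have hk1 : ((k + 1 : ℕ) : K) ≠ 0 := natCast_ne_zero_of_lt (p := p) (by omega) (by omega)
    have h1 := congrArg (Nat.cast (R := K)) (Nat.choose_succ_right_eq n k)
    have h2 := congrArg (Nat.cast (R := K)) (Nat.add_one_mul_choose_eq (n + k) k)
    have h3 := ih (by omega)
    have h4 := two_mul_natCast_add_one_eq_zero (K := K) hpn
    push_cast [Nat.cast_sub (show k ≤ n by omega)] at h1 h2 hk1
    apply mul_right_cancel₀ hk1
    rw [← add_assoc, ← h2, h3, pow_succ]
    linear_combination (-1 : K) ^ k * n.choose k * h4 + (-1) ^ k * h1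

theorem cast_coeff_shiftedLegendre (hpn : p = 2 * n + 1) {k : ℕ} (hk : k ≤ n) :
    ((Polynomial.shiftedLegendre n).coeff k : K) = (n.choose k : K) ^ 2 := by
  have h : (-1 : K) ^ k * (-1) ^ k = 1 := by rw [← mul_pow]; simp
  rw [coeff_shiftedLegendre_eq_mul_choose]
  push_cast
  rw [cast_choose_add hpn hk]
  linear_combination (n.choose k : K) ^ 2 * h

theorem cast_centralBinom (hpn : p = 2 * n + 1) {k : ℕ} (hk : k ≤ n) :
    (k.centralBinom : K) = (-4) ^ k * n.choose k := by
  induction k with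
  | zero => simp
  | succ k ih =>
    have hk1 : ((k + 1 : ℕ) : K) ≠ 0 := natCast_ne_zero_of_lt (p := p) (by omega) (by omega)
    have h1 := congrArg (Nat.cast (R := K)) (Nat.choose_succ_right_eq n k)
    have h2 := congrArg (Nat.cast (R := K)) (Nat.succ_mul_centralBinom_succ k)
    have h3 := ih (by omega)
    have h4 := two_mul_natCast_add_one_eq_zero (K := K) hpn
    push_cast [Nat.cast_sub (show k ≤ n by omega)] at h1 h2 hk1
    rw [h3] at h2
    apply mul_left_cancel₀ hk1
    rw [h2, pow_succ]
    linear_combination 2 * (-4 : K) ^ k * n.choose k * h4 + 4 * (-4) ^ k * h1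

theorem fieldHarmonic_add_eq_sub (hpn : p = 2 * n + 1) {i : ℕ} (hi : i ≤ n) :
    fieldHarmonic K (n + i) = fieldHarmonic K (n - i) := by
  induction i with
  | zero => simp
  | succ i ih =>
    obtain ⟨k, rfl⟩ : ∃ k, n = k + i + 1 := ⟨n - i - 1, by omega⟩
    have h1 := ih (by omega)
    rw [show k + i + 1 - i = k + 1 by omega, fieldHarmonic_succ] at h1
    rw [show k + i + 1 - (i + 1) = k by omega, ← add_assoc, fieldHarmonic_succ, h1]
    have h4 := two_mul_natCast_add_one_eq_zero (K := K) hpn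
    push_cast at h4 ⊢
    rw [show (k : K) + i + 1 + i + 1 = -(k + 1) by linear_combination h4, inv_neg]
    ring

theorem fieldHarmonic_two_mul (hpn : p = 2 * n + 1) : fieldHarmonic K (2 * n) = 0 := by
  rw [two_mul, fieldHarmonic_add_eq_sub hpn le_rfl, Nat.sub_self, fieldHarmonic_zero]

theorem fieldHarmonic_sub (hpn : p = 2 * n + 1) {i : ℕ} (hi : i ≤ n) :
    fieldHarmonic K (n - i) =
      fieldHarmonic K n + 2 * fieldHarmonic K (2 * i) - fieldHarmonic K i := by
  induction i with
  | zero => simp [fieldHarmonic_zero]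
  | succ i ih =>
    obtain ⟨k, rfl⟩ : ∃ k, n = k + i + 1 := ⟨n - i - 1, by omega⟩
    have h1 := ih (by omega)
    rw [show k + i + 1 - i = k + 1 by omega, fieldHarmonic_succ] at h1
    rw [show k + i + 1 - (i + 1) = k by omega, show 2 * (i + 1) = 2 * i + 1 + 1 by ring,
      fieldHarmonic_succ (2 * i + 1), fieldHarmonic_succ (2 * i), fieldHarmonic_succ i]
    have h4 := two_mul_natCast_add_one_eq_zero (K := K) hpn
    have e1 : ((k + 1 : ℕ) : K) ≠ 0 := natCast_ne_zero_of_lt (p := p) (by omega) (by omega)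
    have e2 : ((2 * i + 1 : ℕ) : K) ≠ 0 := natCast_ne_zero_of_lt (p := p) (by omega) (by omega)
    have e3 : (2 : K) ≠ 0 := two_ne_zero_of_odd_char hpn
    push_cast at h4 e1 e2 ⊢
    have a1 : ((k : K) + 1)⁻¹ = -2 * (2 * (i : K) + 1)⁻¹ := by
      field_simp
      linear_combination h4
    have a2 : (2 * (i : K) + 1 + 1)⁻¹ = 2⁻¹ * ((i : K) + 1)⁻¹ := by
      rw [← mul_inv, add_assoc, one_add_one_eq_two, mul_add_one]
    rw [a1] at h1
    rw [a2]
    linear_combination h1 - ((i : K) + 1)⁻¹ * mul_inv_cancel₀ e3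

theorem aeval_shiftedLegendre_eq_choosePowSum (hpn : p = 2 * n + 1) (s : K) :
    Polynomial.aeval s (Polynomial.shiftedLegendre n) = choosePowSum n 2 s := by
  rw [aeval_shiftedLegendre, choosePowSum]
  refine sum_congr rfl fun k hk => ?_
  rw [cast_coeff_shiftedLegendre hpn (mem_range_succ_iff.1 hk)]

theorem aeval_clausenPoly_eq_choosePowSum (hpn : p = 2 * n + 1) (u : K) :
    Polynomial.aeval u (clausenPoly n) = choosePowSum n 3 (-4 * u) := by
  rw [aeval_clausenPoly, choosePowSum]
  refine sum_congr rfl fun k hk => ?_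
  have hk := mem_range_succ_iff.1 hk
  rw [cast_coeff_shiftedLegendre hpn hk, cast_centralBinom hpn hk, mul_pow]
  ring

theorem choosePowSum_two_sq (hpn : p = 2 * n + 1) (s : K) :
    choosePowSum n 2 s ^ 2 = choosePowSum n 3 (-4 * (s * (1 - s))) := by
  rw [← aeval_shiftedLegendre_eq_choosePowSum hpn, aeval_shiftedLegendre_sq,
    aeval_clausenPoly_eq_choosePowSum hpn]

theorem choosePowSum_one_sub_sq (hpn : p = 2 * n + 1) (s : K) :
    choosePowSum n 2 (1 - s) ^ 2 = choosePowSum n 2 s ^ 2 := by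
  rw [choosePowSum_two_sq hpn, choosePowSum_two_sq hpn, sub_sub_cancel, mul_comm s]

theorem choosePowSum_eq_zero_or_pow_eq_one_of_mul_one_sub_eq_one (hpn : p = 2 * n + 1) {s : K}
    (hs : s * (1 - s) = 1) : choosePowSum n 2 s = 0 ∨ s ^ (2 * n) = 1 := by
  have h := choosePowSum_one_sub_sq hpn s
  rw [← pow_mul_choosePowSum_inv n 2 (left_ne_zero_of_mul_eq_one hs),
    ← eq_inv_of_mul_eq_one_right hs] at h ⊢
  rw [or_iff_not_imp_left]
  intro h0
  refine mul_right_cancel₀ (pow_ne_zero 2 (right_ne_zero_of_mul h0)) ?_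
  linear_combination -h

theorem four_pow_eq_one [Fact p.Prime] (hpn : p = 2 * n + 1) : (4 : K) ^ n = 1 := by
  have h : (2 : K) ^ p = 2 := map_ofNat (frobenius K p) 2
  refine mul_right_cancel₀ (two_ne_zero_of_odd_char (K := K) hpn) ?_
  rw [one_mul, show (4 : K) = 2 ^ 2 by norm_num, ← pow_mul, ← pow_succ, ← hpn, h]

theorem one_sub_pow_eq_one_of_mul_one_sub_eq_sixteen [Fact p.Prime] (hpn : p = 2 * n + 1) {s : K}
    (hs : s * (1 - s) = 16) (h0 : choosePowSum n 2 s ≠ 0) : (1 - s) ^ n = 1 := by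
  have h2 : (2 : K) ≠ 0 := two_ne_zero_of_odd_char hpn
  have h16 : s * (1 - s) ≠ 0 := by
    rw [hs, show (16 : K) = 2 ^ 4 by norm_num]
    exact pow_ne_zero 4 h2
  have hs0 : s ≠ 0 := left_ne_zero_of_mul h16
  have hs1 : 1 - s ≠ 0 := right_ne_zero_of_mul h16
  set y := -4 * (s⁻¹ * (1 - s⁻¹)) with hy
  have hsy : s ^ 2 * y = 4 * (1 - s) := by
    rw [hy]
    field_simp
    ring
  have hy0 : y ≠ 0 := fun h => by
    rw [h, mul_zero, eq_comm, show (4 : K) = 2 * 2 by norm_num] at hsy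
    exact mul_ne_zero (mul_ne_zero h2 h2) hs1 hsy
  have hy' : y⁻¹ = -4 * ((1 - s)⁻¹ * (1 - (1 - s)⁻¹)) := by
    refine inv_eq_of_mul_eq_one_right (mul_left_cancel₀ (pow_ne_zero 2 hs0) ?_)
    rw [← mul_assoc, hsy]
    field_simp
    linear_combination -s * hs
  have hS : choosePowSum n 2 s ^ 2 =
      (s ^ 2 * y) ^ n * choosePowSum n 2 (1 - s)⁻¹ ^ 2 := by
    rw [choosePowSum_two_sq hpn (1 - s)⁻¹, ← hy', mul_pow, mul_assoc,
      pow_mul_choosePowSum_inv n 3 hy0, hy, ← choosePowSum_two_sq hpn,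
      ← pow_mul_choosePowSum_inv n 2 hs0]
    ring
  have hS' : choosePowSum n 2 s ^ 2 =
      (1 - s) ^ (2 * n) * choosePowSum n 2 (1 - s)⁻¹ ^ 2 := by
    rw [← choosePowSum_one_sub_sq hpn, ← pow_mul_choosePowSum_inv n 2 hs1]
    ring
  rw [hsy, mul_pow, four_pow_eq_one hpn, one_mul] at hS
  refine mul_right_cancel₀ (pow_ne_zero 2 h0) ?_
  linear_combination (1 - s) ^ n * hS - hS'

end CharP

section LogRatio

open PadicInt (toZMod)

variable {p : ℕ} [Fact p.Prime]

theorem toZMod_eq_zero_iff_dvd {x : ℤ_[p]} : toZMod x = 0 ↔ (p : ℤ_[p]) ∣ x := by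
  rw [← RingHom.mem_ker, PadicInt.ker_toZMod, PadicInt.maximalIdeal_eq_span_p,
    Ideal.mem_span_singleton]

theorem isUnit_iff_toZMod_ne_zero {x : ℤ_[p]} : IsUnit x ↔ toZMod x ≠ 0 := by
  rw [Ne, ← RingHom.mem_ker, PadicInt.ker_toZMod, IsLocalRing.mem_maximalIdeal, mem_nonunits_iff,
    not_not]

theorem isUnit_natCast_of_lt_s6 {k : ℕ} (h0 : 0 < k) (hk : k < p) : IsUnit (k : ℤ_[p]) := by
  rw [isUnit_iff_toZMod_ne_zero, map_natCast]
  exact natCast_ne_zero_of_lt (p := p) h0 hk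

theorem isUnit_two_s6 {n : ℕ} (hpn : p = 2 * n + 1) : IsUnit (2 : ℤ_[p]) := by
  rw [isUnit_iff_toZMod_ne_zero, map_ofNat]
  exact two_ne_zero_of_odd_char hpn

theorem isUnit_four_s6 {n : ℕ} (hpn : p = 2 * n + 1) : IsUnit (4 : ℤ_[p]) := by
  rw [show (4 : ℤ_[p]) = 2 * 2 by norm_num]
  exact (isUnit_two_s6 hpn).mul (isUnit_two_s6 hpn)

/-- The relation `A = B (1 + p δ)` with `δ` reducing to `d`; when `B ≠ 0` it says that `d` is the
reduction of `(A / B - 1) / p`, which behaves like a logarithm of `A / B`. -/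
def HasLogRatio (A B : ℤ_[p]) (d : ZMod p) : Prop :=
  ∃ δ : ℤ_[p], toZMod δ = d ∧ A = B * (1 + p * δ)

namespace HasLogRatio

variable {A B C A' B' : ℤ_[p]} {d d' : ZMod p}

theorem refl (A : ℤ_[p]) : HasLogRatio A A 0 := ⟨0, map_zero _, by ring⟩

theorem mul (h : HasLogRatio A B d) (h' : HasLogRatio A' B' d') :
    HasLogRatio (A * A') (B * B') (d + d') := by
  obtain ⟨δ, rfl, rfl⟩ := h
  obtain ⟨δ', rfl, rfl⟩ := h'
  exact ⟨δ + δ' + p * (δ * δ'), by simp, by ring⟩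

theorem pow (h : HasLogRatio A B d) (k : ℕ) : HasLogRatio (A ^ k) (B ^ k) (k * d) := by
  induction k with
  | zero => simpa using refl 1
  | succ k ih =>
    rw [pow_succ, pow_succ, Nat.cast_succ, add_one_mul]
    exact ih.mul h

theorem trans (h : HasLogRatio A B d) (h' : HasLogRatio B C d') : HasLogRatio A C (d + d') := by
  obtain ⟨δ, rfl, rfl⟩ := h
  obtain ⟨δ', rfl, rfl⟩ := h'
  exact ⟨δ + δ' + p * (δ * δ'), by simp, by ring⟩

theorem add_natCast_mul {a : ℤ_[p]} (ha : IsUnit a) (b : ℤ_[p]) :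
    HasLogRatio (a + (p : ℤ_[p]) * b) a (toZMod b * (toZMod a)⁻¹) := by
  obtain ⟨v, hv⟩ := ha.exists_right_inv
  refine ⟨b * v, ?_, by linear_combination -(p * b) * hv⟩
  have hv' : toZMod a * toZMod v = 1 := by rw [← map_mul, hv, map_one]
  rw [map_mul, eq_inv_of_mul_eq_one_right hv']

theorem of_mul (h : HasLogRatio (A * A') (B * B') d) (h' : HasLogRatio A' B' d') (h0 : B' ≠ 0) :
    HasLogRatio A B (d - d') := by
  obtain ⟨δ, rfl, h⟩ := h
  obtain ⟨δ', rfl, rfl⟩ := h'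
  obtain ⟨v, hv⟩ := ((isUnit_iff_toZMod_ne_zero (x := 1 + (p : ℤ_[p]) * δ')).2
    (by simp)).exists_right_inv
  have hv1 : toZMod v = 1 := by simpa using congrArg toZMod hv
  refine ⟨(δ - δ') * v, by rw [map_mul, hv1, mul_one, map_sub], mul_right_cancel₀ h0 ?_⟩
  linear_combination v * h - (A * B' - B * B') * hv

theorem unique (h : HasLogRatio A B d) (h' : HasLogRatio A B d') (hB : B ≠ 0) : d = d' := by
  obtain ⟨δ, rfl, rfl⟩ := h
  obtain ⟨δ', rfl, h⟩ := h'
  have hp : (p : ℤ_[p]) ≠ 0 := Nat.cast_ne_zero.2 (Fact.out : p.Prime).ne_zero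
  congr 1
  apply mul_left_cancel₀ (mul_ne_zero hB hp)
  linear_combination h

theorem exists_sum_eq {ι : Type*} {s : Finset ι} {A B : ι → ℤ_[p]} {d : ι → ZMod p}
    (h : ∀ i ∈ s, HasLogRatio (A i) (B i) (d i)) :
    ∃ D : ℤ_[p], toZMod D = ∑ i ∈ s, toZMod (B i) * d i ∧ ∑ i ∈ s, A i = ∑ i ∈ s, B i + p * D := by
  choose! δ hδ hA using h
  refine ⟨∑ i ∈ s, B i * δ i, ?_, ?_⟩
  · rw [map_sum]
    exact sum_congr rfl fun i hi => by rw [map_mul, hδ i hi]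
  · rw [mul_sum, ← sum_add_distrib]
    exact sum_congr rfl fun i hi => by rw [hA i hi]; ring

end HasLogRatio

variable {n : ℕ}

theorem hasLogRatio_factorial_mul_add (l : ℕ) {N : ℕ} (hN : N < p) :
    HasLogRatio (p := p) ((l * p + N).factorial) ((l * p).factorial * N.factorial)
      (l * fieldHarmonic (ZMod p) N) := by
  induction N with
  | zero => simpa [fieldHarmonic_zero] using HasLogRatio.refl _
  | succ N ih =>
    have h := (HasLogRatio.add_natCast_mul (isUnit_natCast_of_lt_s6 (by omega) hN) l).mul
      (ih (by omega))
    rw [map_natCast, map_natCast] at h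
    convert h using 1
    · rw [← add_assoc, Nat.factorial_succ]
      push_cast
      ring
    · rw [Nat.factorial_succ]
      push_cast
      ring
    · rw [fieldHarmonic_succ]
      push_cast
      ring

theorem hasLogRatio_factorial_mul (hpn : p = 2 * n + 1) (l : ℕ) :
    HasLogRatio (p := p) ((l * p).factorial) (l.factorial * p.factorial ^ l) 0 := by
  induction l with
  | zero => simpa using HasLogRatio.refl 1
  | succ l ih =>
    have h := hasLogRatio_factorial_mul_add l (show 2 * n < p by omega)
    rw [fieldHarmonic_two_mul hpn, mul_zero] at h
    have h := (HasLogRatio.refl (((l + 1) * p : ℕ) : ℤ_[p])).mul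
      (h.trans (ih.mul (HasLogRatio.refl ((2 * n).factorial : ℤ_[p]))))
    convert h using 1
    · rw [show (l + 1) * p = l * p + 2 * n + 1 by rw [hpn]; ring, Nat.factorial_succ, Nat.cast_mul]
    · have hp : p.factorial = p * (2 * n).factorial := by
        rw [hpn, Nat.factorial_succ]
      rw [Nat.factorial_succ l, pow_succ, hp]
      push_cast
      ring
    · simp

theorem hasLogRatio_factorial (hpn : p = 2 * n + 1) (l : ℕ) {N : ℕ} (hN : N < p) :
    HasLogRatio (p := p) ((l * p + N).factorial) (l.factorial * p.factorial ^ l * N.factorial)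
      (l * fieldHarmonic (ZMod p) N) := by
  have h := (hasLogRatio_factorial_mul_add l hN).trans
    ((hasLogRatio_factorial_mul hpn l).mul (HasLogRatio.refl _))
  rwa [add_zero, add_zero] at h

open Polynomial (shiftedLegendre)

theorem coeff_shiftedLegendre_mul_factorial {m k : ℕ} (hk : k ≤ m) :
    (shiftedLegendre m).coeff k * ((m - k).factorial * k.factorial ^ 2 : ℕ) =
      (-1) ^ k * (m + k).factorial := by
  have h1 := Nat.choose_mul_factorial_mul_factorial hk
  have h2 := Nat.choose_mul_factorial_mul_factorial (Nat.le_add_left k m)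
  rw [Nat.add_sub_cancel] at h2
  rw [coeff_shiftedLegendre_eq_mul_choose, ← h2, ← h1]
  push_cast
  ring

theorem hasLogRatio_coeff_shiftedLegendre (hpn : p = 2 * n + 1) {i : ℕ} (hi : i ≤ n) :
    HasLogRatio (p := p) ((shiftedLegendre (n + p)).coeff (p + i))
      (-2 * (shiftedLegendre n).coeff i)
      (2 * fieldHarmonic (ZMod p) (n + i) - 2 * fieldHarmonic (ZMod p) i) := by
  have h1 : HasLogRatio (p := p) ((2 * p + (n + i)).factorial)
      (2 * p.factorial ^ 2 * (n + i).factorial) (2 * fieldHarmonic (ZMod p) (n + i)) := by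
    simpa using hasLogRatio_factorial hpn 2 (show n + i < p by omega)
  have h2 : HasLogRatio (p := p) ((p + i).factorial) (p.factorial * i.factorial)
      (fieldHarmonic (ZMod p) i) := by
    simpa using hasLogRatio_factorial hpn 1 (show i < p by omega)
  have e1 := coeff_shiftedLegendre_mul_factorial (show p + i ≤ n + p by omega)
  rw [show n + p + (p + i) = 2 * p + (n + i) by ring, show n + p - (p + i) = n - i by omega,
    pow_add, Odd.neg_one_pow ⟨n, hpn⟩] at e1
  have e2 := coeff_shiftedLegendre_mul_factorial hi
  apply_fun (Int.cast : ℤ → ℤ_[p]) at e1 e2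
  push_cast at e1 e2
  have h3 := (HasLogRatio.refl ((n - i).factorial : ℤ_[p])).mul (h2.pow 2)
  rw [zero_add, Nat.cast_two] at h3
  refine HasLogRatio.of_mul ?_ h3 ?_
  · rw [e1]
    convert (HasLogRatio.refl (-1 * (-1) ^ i : ℤ_[p])).mul h1 using 1
    · linear_combination -2 * (p.factorial : ℤ_[p]) ^ 2 * e2
    · rw [zero_add]
  · exact_mod_cast (by positivity : (n - i).factorial * (p.factorial * i.factorial) ^ 2 ≠ 0)

theorem hasLogRatio_centralBinom (hpn : p = 2 * n + 1) {i : ℕ} (hi : i ≤ n) :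
    HasLogRatio (p := p) ((p + i).centralBinom) (2 * i.centralBinom)
      (2 * fieldHarmonic (ZMod p) (2 * i) - 2 * fieldHarmonic (ZMod p) i) := by
  have h1 : HasLogRatio (p := p) ((2 * p + 2 * i).factorial)
      (2 * p.factorial ^ 2 * (2 * i).factorial) (2 * fieldHarmonic (ZMod p) (2 * i)) := by
    simpa using hasLogRatio_factorial hpn 2 (show 2 * i < p by omega)
  have h2 : HasLogRatio (p := p) ((p + i).factorial) (p.factorial * i.factorial)
      (fieldHarmonic (ZMod p) i) := by
    simpa using hasLogRatio_factorial hpn 1 (show i < p by omega)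
  have e (k : ℕ) : (k.centralBinom : ℤ_[p]) * k.factorial ^ 2 = (2 * k).factorial := by
    rw [Nat.centralBinom_eq_two_mul_choose, two_mul, ← Nat.add_choose_mul_factorial_mul_factorial]
    push_cast
    ring
  have h3 := h2.pow 2
  rw [Nat.cast_two] at h3
  refine HasLogRatio.of_mul ?_ h3 ?_
  · rw [e, mul_add]
    convert h1 using 1
    linear_combination 2 * (p.factorial : ℤ_[p]) ^ 2 * e i
  · exact_mod_cast (by positivity : (p.factorial * i.factorial) ^ 2 ≠ 0)

theorem sq_dvd_coeff_shiftedLegendre_sub (hpn : p = 2 * n + 1) {k : ℕ} (hk : k < p) :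
    (p : ℤ) ^ 2 ∣ (shiftedLegendre (n + p)).coeff k - (shiftedLegendre n).coeff k := by
  induction k with
  | zero => simp [coeff_shiftedLegendre_eq_mul_choose]
  | succ k ih =>
    obtain ⟨c, hc⟩ := ih (by omega)
    have h1 := succ_sq_mul_coeff_shiftedLegendre_succ (n + p) k
    have h2 := succ_sq_mul_coeff_shiftedLegendre_succ n k
    have hcop : IsCoprime ((p : ℤ) ^ 2) (((k + 1 : ℕ) : ℤ) ^ 2) := by
      apply IsCoprime.pow
      rw [Nat.isCoprime_iff_coprime]
      exact Nat.coprime_of_lt_prime (by omega) hk Fact.out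
    refine hcop.dvd_of_dvd_mul_left ⟨-2 * (shiftedLegendre (n + p)).coeff k +
      ((k : ℤ) * (k + 1) - n * (n + 1)) * c, ?_⟩
    have hpz : (p : ℤ) = 2 * n + 1 := by exact_mod_cast hpn
    push_cast at h1 h2 ⊢
    linear_combination h1 - h2 + ((k : ℤ) * (k + 1) - n * (n + 1)) * hc +
      (p : ℤ) * (shiftedLegendre (n + p)).coeff k * hpz

end LogRatio

section FermatQuotient

variable {p : ℕ} [Fact p.Prime] {n : ℕ}

open PadicInt (toZMod)

/-- The reduction `q(y)` of the Fermat quotient `(y^(p-1) - 1) / p` of a `p`-adic unit `y`; the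
value at a non-unit is junk. -/
noncomputable def fermatQuotient (y : ℤ_[p]) : ZMod p :=
  Classical.epsilon fun q => HasLogRatio (y ^ (p - 1)) 1 q

theorem hasLogRatio_fermatQuotient {y : ℤ_[p]} (hy : IsUnit y) :
    HasLogRatio (y ^ (p - 1)) 1 (fermatQuotient y) := by
  have h : toZMod (y ^ (p - 1) - 1) = 0 := by
    rw [map_sub, map_pow, ZMod.pow_card_sub_one_eq_one (isUnit_iff_toZMod_ne_zero.1 hy), map_one,
      sub_self]
  obtain ⟨δ, hδ⟩ := toZMod_eq_zero_iff_dvd.1 h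
  exact Classical.epsilon_spec ⟨toZMod δ, δ, rfl, by linear_combination hδ⟩

theorem fermatQuotient_eq {y : ℤ_[p]} {q : ZMod p} (h : HasLogRatio (y ^ (p - 1)) 1 q) :
    fermatQuotient y = q :=
  (Classical.epsilon_spec ⟨q, h⟩ : HasLogRatio _ _ (fermatQuotient y)).unique h one_ne_zero

theorem fermatQuotient_mul {x y : ℤ_[p]} (hx : IsUnit x) (hy : IsUnit y) :
    fermatQuotient (x * y) = fermatQuotient x + fermatQuotient y := by
  apply fermatQuotient_eq
  simpa [mul_pow] using (hasLogRatio_fermatQuotient hx).mul (hasLogRatio_fermatQuotient hy)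

theorem fermatQuotient_pow {y : ℤ_[p]} (hy : IsUnit y) (k : ℕ) :
    fermatQuotient (y ^ k) = k * fermatQuotient y := by
  apply fermatQuotient_eq
  simpa [pow_right_comm] using (hasLogRatio_fermatQuotient hy).pow k

theorem fermatQuotient_eq_neg_of_mul_eq_one {x y : ℤ_[p]} (h : x * y = 1) :
    fermatQuotient y = -fermatQuotient x := by
  have h1 : fermatQuotient (1 : ℤ_[p]) = 0 := fermatQuotient_eq (by simpa using HasLogRatio.refl 1)
  rw [eq_neg_iff_add_eq_zero, add_comm, ← fermatQuotient_mul (IsUnit.of_mul_eq_one _ h)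
    (IsUnit.of_mul_eq_one_right _ h), h, h1]

theorem fermatQuotient_neg (hpn : p = 2 * n + 1) (y : ℤ_[p]) :
    fermatQuotient (-y) = fermatQuotient y := by
  rw [fermatQuotient, Even.neg_pow ⟨n, by omega⟩, fermatQuotient]

theorem hasLogRatio_choose_two_mul (hpn : p = 2 * n + 1) {k : ℕ} (hk : k ≤ 2 * n) :
    HasLogRatio (p := p) ((2 * n).choose k) ((-1) ^ k) (-fieldHarmonic (ZMod p) k) := by
  induction k with
  | zero => simpa [fieldHarmonic_zero] using HasLogRatio.refl 1
  | succ k ih =>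
    have hu : IsUnit ((k + 1 : ℕ) : ℤ_[p]) := isUnit_natCast_of_lt_s6 (by omega) (by omega)
    have h := (ih (by omega)).mul (HasLogRatio.add_natCast_mul hu.neg 1)
    have e := congrArg (Nat.cast (R := ℤ_[p])) (Nat.choose_succ_right_eq (2 * n) k)
    have hpz : (p : ℤ_[p]) = 2 * n + 1 := by exact_mod_cast congrArg (Nat.cast (R := ℤ_[p])) hpn
    push_cast [Nat.cast_sub (show k ≤ 2 * n by omega)] at e
    have h' : HasLogRatio (p := p) ((2 * n).choose (k + 1) * (k + 1 : ℕ))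
        ((-1) ^ (k + 1) * (k + 1 : ℕ)) (-fieldHarmonic (ZMod p) (k + 1)) := by
      convert h using 1
      · push_cast
        linear_combination e - ((2 * n).choose k : ℤ_[p]) * hpz
      · ring
      · rw [fieldHarmonic_succ, map_one, map_neg, map_natCast, inv_neg]
        push_cast
        ring
    simpa using h'.of_mul (HasLogRatio.refl _) hu.ne_zero

theorem hasLogRatio_centralBinom_choose (hpn : p = 2 * n + 1) {k : ℕ} (hk : k ≤ n) :
    HasLogRatio (p := p) k.centralBinom ((-4) ^ k * n.choose k)
      (2⁻¹ * (fieldHarmonic (ZMod p) (n - k) - fieldHarmonic (ZMod p) n)) := by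
  induction k with
  | zero => simpa using HasLogRatio.refl 1
  | succ k ih =>
    obtain ⟨j, rfl⟩ : ∃ j, n = j + k + 1 := ⟨n - k - 1, by omega⟩
    have h2 : (2 : ZMod p) ≠ 0 := two_ne_zero_of_odd_char hpn
    have hk : IsUnit ((k + 1 : ℕ) : ℤ_[p]) := isUnit_natCast_of_lt_s6 (by omega) (by omega)
    have hj : IsUnit ((j + 1 : ℕ) : ℤ_[p]) := isUnit_natCast_of_lt_s6 (by omega) (by omega)
    have h := (ih (by omega)).mul (HasLogRatio.add_natCast_mul ((isUnit_four_s6 hpn).neg.mul hj) 2)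
    have e1 := congrArg (Nat.cast (R := ℤ_[p])) (Nat.succ_mul_centralBinom_succ k)
    have e2 := congrArg (Nat.cast (R := ℤ_[p])) (Nat.choose_succ_right_eq (j + k + 1) k)
    have hpz := congrArg (Nat.cast (R := ℤ_[p])) hpn
    rw [show j + k + 1 - k = j + 1 by omega] at h e2
    push_cast at e1 e2 hpz
    have h' : HasLogRatio (p := p) ((k + 1).centralBinom * (k + 1 : ℕ))
        ((-4) ^ (k + 1) * (j + k + 1).choose (k + 1) * (k + 1 : ℕ))
        (2⁻¹ * (fieldHarmonic (ZMod p) j - fieldHarmonic (ZMod p) (j + k + 1))) := by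
      convert h using 1
      · push_cast
        linear_combination e1 - 2 * (k.centralBinom : ℤ_[p]) * hpz
      · push_cast
        linear_combination (-4) ^ (k + 1) * e2
      · rw [fieldHarmonic_succ j, map_mul, map_natCast, map_neg, map_ofNat, map_ofNat, mul_inv]
        push_cast
        have h4 : (-4 : ZMod p)⁻¹ = -(2⁻¹ * 2⁻¹) := by
          rw [← mul_inv, ← inv_neg]
          norm_num
        rw [h4]
        linear_combination 2⁻¹ * ((j : ZMod p) + 1)⁻¹ * mul_inv_cancel₀ h2
    rw [show j + k + 1 - (k + 1) = j by omega]
    simpa using h'.of_mul (HasLogRatio.refl _) hk.ne_zero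

theorem fieldHarmonic_eq_fermatQuotient_two (hpn : p = 2 * n + 1) :
    fieldHarmonic (ZMod p) n = -2 * fermatQuotient 2 := by
  have h2 : (2 : ZMod p) ≠ 0 := two_ne_zero_of_odd_char hpn
  have h := (hasLogRatio_fermatQuotient (isUnit_two_s6 hpn)).mul (HasLogRatio.refl ((-1) ^ n))
  have e : (2 : ℤ_[p]) ^ (p - 1) * (-1) ^ n = (-4) ^ n := by
    rw [show p - 1 = 2 * n by omega, pow_mul, ← mul_pow]
    norm_num
  rw [one_mul, add_zero, e] at h
  have h' := hasLogRatio_centralBinom_choose hpn le_rfl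
  rw [Nat.choose_self, Nat.cast_one, mul_one, Nat.sub_self, fieldHarmonic_zero, zero_sub] at h'
  have key := (hasLogRatio_choose_two_mul hpn (show n ≤ 2 * n by omega)).unique (h'.trans h)
    (pow_ne_zero n (neg_ne_zero.2 one_ne_zero))
  linear_combination -2 * key + fieldHarmonic (ZMod p) n * mul_inv_cancel₀ h2

end FermatQuotient

section Expansion

open PadicInt (toZMod)
open Polynomial (shiftedLegendre aeval)

variable {p : ℕ} [Fact p.Prime] {n : ℕ}

/-- The sum `D_r(y) = ∑ C(n,i)^r y^i (r (H_{n-i} - H_i) + q(y))`: the derivative of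
`S_r(y) = ∑ C(n,i)^r y^i` with respect to the index `i`, the Fermat quotient playing the role of
`log y`. -/
noncomputable def choosePowDeriv (n r : ℕ) (y : ℤ_[p]) : ZMod p :=
  ∑ i ∈ range (n + 1), (n.choose i : ZMod p) ^ r * toZMod y ^ i *
    (r * (fieldHarmonic (ZMod p) (n - i) - fieldHarmonic (ZMod p) i) + fermatQuotient y)

theorem pow_mul_choosePowDeriv_of_mul_eq_one (n r : ℕ) {y z : ℤ_[p]} (h : y * z = 1) :
    toZMod y ^ n * choosePowDeriv n r z = -choosePowDeriv n r y := by
  have h1 : toZMod y * toZMod z = 1 := by rw [← map_mul, h, map_one]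
  rw [choosePowDeriv, ← sum_range_reflect, choosePowDeriv, mul_sum, ← sum_neg_distrib,
    fermatQuotient_eq_neg_of_mul_eq_one h]
  refine sum_congr rfl fun i hi => ?_
  obtain ⟨k, rfl⟩ := Nat.exists_eq_add_of_le (mem_range_succ_iff.1 hi)
  have h2 : toZMod y ^ k * toZMod z ^ k = 1 := by rw [← mul_pow, h1, one_pow]
  rw [show i + k + 1 - 1 - i = k by omega, pow_add, Nat.choose_symm_add,
    show i + k - k = i by omega, show i + k - i = k by omega]
  linear_combination -(((i + k).choose k : ZMod p) ^ r * toZMod y ^ i *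
    (r * (fieldHarmonic (ZMod p) k - fieldHarmonic (ZMod p) i) + fermatQuotient y)) * h2

theorem sq_dvd_sum_low_sub (hpn : p = 2 * n + 1) (c : ℕ → ℤ_[p]) (y : ℤ_[p]) :
    (p : ℤ_[p]) ^ 2 ∣ ∑ k ∈ range p, c k * (shiftedLegendre (n + p)).coeff k * y ^ k -
      ∑ k ∈ range (n + 1), c k * (shiftedLegendre n).coeff k * y ^ k := by
  have hsub : ∑ k ∈ range (n + 1), c k * (shiftedLegendre n).coeff k * y ^ k =
      ∑ k ∈ range p, c k * (shiftedLegendre n).coeff k * y ^ k := by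
    refine sum_subset (range_subset_range.2 (by omega)) fun k _ hk => ?_
    rw [mem_range, not_lt] at hk
    rw [coeff_shiftedLegendre_eq_zero hk, Int.cast_zero, mul_zero, zero_mul]
  rw [hsub, ← sum_sub_distrib]
  refine dvd_sum fun k hk => ?_
  have h := map_dvd (Int.castRingHom ℤ_[p]) (sq_dvd_coeff_shiftedLegendre_sub hpn (mem_range.1 hk))
  convert h.mul_left (c k * y ^ k) using 1
  · simp
  · simp only [eq_intCast, Int.cast_sub]
    ring

theorem exists_sum_high_eq (hpn : p = 2 * n + 1) {c : ℕ → ℤ_[p]} {c₁ y : ℤ_[p]} {e : ℕ → ZMod p}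
    (hc : ∀ i ≤ n, HasLogRatio (c (p + i)) (c₁ * c i) (e i)) (hy : IsUnit y) :
    ∃ D : ℤ_[p], toZMod D = -2 * toZMod c₁ * toZMod y * ∑ i ∈ range (n + 1),
        toZMod (c i) * (n.choose i : ZMod p) ^ 2 * toZMod y ^ i *
          (2 * (fieldHarmonic (ZMod p) (n - i) - fieldHarmonic (ZMod p) i) + e i +
            fermatQuotient y) ∧
      ∑ i ∈ range (n + 1), c (p + i) * (shiftedLegendre (n + p)).coeff (p + i) * y ^ (p + i) =
        -2 * c₁ * y * ∑ i ∈ range (n + 1), c i * (shiftedLegendre n).coeff i * y ^ i + p * D := by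
  have h : ∀ i ∈ range (n + 1), HasLogRatio (p := p)
      (c (p + i) * (shiftedLegendre (n + p)).coeff (p + i) * y ^ (p + i))
      (-2 * c₁ * y * (c i * (shiftedLegendre n).coeff i * y ^ i))
      (2 * (fieldHarmonic (ZMod p) (n - i) - fieldHarmonic (ZMod p) i) + e i +
        fermatQuotient y) := by
    intro i hi
    have hi := mem_range_succ_iff.1 hi
    convert ((hc i hi).mul (hasLogRatio_coeff_shiftedLegendre hpn hi)).mul
      ((hasLogRatio_fermatQuotient hy).mul (HasLogRatio.refl (y ^ (i + 1)))) using 1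
    · rw [← pow_add, show p - 1 + (i + 1) = p + i by omega]
    · ring
    · rw [fieldHarmonic_add_eq_sub hpn hi]
      ring
  obtain ⟨D, hD, hsum⟩ := HasLogRatio.exists_sum_eq h
  refine ⟨D, ?_, by rw [hsum, mul_sum]⟩
  rw [hD, mul_sum]
  refine sum_congr rfl fun i hi => ?_
  simp only [map_mul, map_neg, map_ofNat, map_intCast, map_pow,
    cast_coeff_shiftedLegendre hpn (mem_range_succ_iff.1 hi)]
  ring

theorem exists_aeval_shiftedLegendre_add_char (hpn : p = 2 * n + 1) {s : ℤ_[p]} (hs : IsUnit s) :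
    ∃ D : ℤ_[p], toZMod D = -2 * toZMod s * choosePowDeriv n 2 s ∧
      (p : ℤ_[p]) ^ 2 ∣ aeval s (shiftedLegendre (n + p)) -
        ((1 - 2 * s) * aeval s (shiftedLegendre n) + p * D) := by
  obtain ⟨D, hD, hsum⟩ := exists_sum_high_eq hpn (c := fun _ => 1) (c₁ := 1) (e := fun _ => 0)
    (fun i _ => by simpa using HasLogRatio.refl 1) hs
  refine ⟨D, ?_, ?_⟩
  · simpa [choosePowDeriv] using hD
  · convert sq_dvd_sum_low_sub hpn (fun _ => 1) s using 1
    simp only [one_mul] at hsum ⊢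
    rw [aeval_shiftedLegendre, aeval_shiftedLegendre, show n + p + 1 = p + (n + 1) by ring,
      sum_range_add, hsum]
    ring

theorem fermatQuotient_neg_four_mul (hpn : p = 2 * n + 1) {u : ℤ_[p]} (hu : IsUnit u) :
    fermatQuotient (-4 * u) = fermatQuotient u - fieldHarmonic (ZMod p) n := by
  rw [neg_mul, fermatQuotient_neg hpn, show (4 : ℤ_[p]) = 2 ^ 2 by norm_num,
    fermatQuotient_mul ((isUnit_two_s6 hpn).pow 2) hu, fermatQuotient_pow (isUnit_two_s6 hpn),
    fieldHarmonic_eq_fermatQuotient_two hpn]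
  push_cast
  ring

theorem exists_aeval_clausenPoly_add_char (hpn : p = 2 * n + 1) {u : ℤ_[p]} (hu : IsUnit u) :
    ∃ D : ℤ_[p], toZMod D = -4 * toZMod u * choosePowDeriv n 3 (-4 * u) ∧
      (p : ℤ_[p]) ^ 2 ∣ aeval u (clausenPoly (n + p)) -
        ((1 - 4 * u) * aeval u (clausenPoly n) + p * D) := by
  obtain ⟨D, hD, hsum⟩ := exists_sum_high_eq hpn (c := fun k => (k.centralBinom : ℤ_[p])) (c₁ := 2)
    (fun i hi => hasLogRatio_centralBinom hpn hi) hu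
  refine ⟨D, ?_, ?_⟩
  · rw [hD, choosePowDeriv, fermatQuotient_neg_four_mul hpn hu, mul_sum, mul_sum]
    refine sum_congr rfl fun i hi => ?_
    have hi := mem_range_succ_iff.1 hi
    rw [map_natCast, cast_centralBinom hpn hi, map_mul, map_neg, map_ofNat, map_ofNat, mul_pow,
      fieldHarmonic_sub hpn hi]
    push_cast
    ring
  · convert sq_dvd_sum_low_sub hpn (fun k => (k.centralBinom : ℤ_[p])) u using 1
    rw [aeval_clausenPoly, aeval_clausenPoly, show n + p + 1 = p + (n + 1) by ring,
      sum_range_add, hsum]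
    ring

end Expansion

section Congruences

open PadicInt (toZMod)
open Polynomial (shiftedLegendre aeval)

variable {p : ℕ} [Fact p.Prime] {n : ℕ}

theorem toZMod_aeval_shiftedLegendre (hpn : p = 2 * n + 1) (s : ℤ_[p]) :
    toZMod (aeval s (shiftedLegendre n)) = choosePowSum n 2 (toZMod s) := by
  rw [← aeval_shiftedLegendre_eq_choosePowSum hpn, aeval_shiftedLegendre, aeval_shiftedLegendre,
    map_sum]
  simp

theorem toZMod_aeval_clausenPoly (hpn : p = 2 * n + 1) (u : ℤ_[p]) :
    toZMod (aeval u (clausenPoly n)) = choosePowSum n 3 (-4 * toZMod u) := by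
  rw [← aeval_clausenPoly_eq_choosePowSum hpn, aeval_clausenPoly, aeval_clausenPoly, map_sum]
  simp

theorem toZMod_eq_zero_of_sq_dvd_mul {x : ℤ_[p]} (h : (p : ℤ_[p]) ^ 2 ∣ p * x) :
    toZMod x = 0 := by
  rw [pow_two] at h
  exact toZMod_eq_zero_iff_dvd.2
    ((mul_dvd_mul_iff_left (Nat.cast_ne_zero.2 (Fact.out : p.Prime).ne_zero)).1 h)

/-- The quantity `T(s) = s S_2(s) D_2(s)`; up to the factor `-4 (1 - 2s)` it is the `p`-linear
term of `P_{n+p}(s)² - (1 - 2s)² P_n(s)²`. -/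
noncomputable def choosePowSqDeriv (n : ℕ) (s : ℤ_[p]) : ZMod p :=
  toZMod s * choosePowSum n 2 (toZMod s) * choosePowDeriv n 2 s

theorem mul_choosePowDeriv_three (hpn : p = 2 * n + 1) {s : ℤ_[p]} (hs : IsUnit s)
    (hs' : IsUnit (1 - s)) :
    toZMod s * (1 - toZMod s) * choosePowDeriv n 3 (-4 * (s * (1 - s))) =
      (1 - 2 * toZMod s) * choosePowSqDeriv n s := by
  have h4 : (4 : ZMod p) ≠ 0 := by
    rw [← map_ofNat toZMod]
    exact isUnit_iff_toZMod_ne_zero.1 (isUnit_four_s6 hpn)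
  obtain ⟨D, hD, x, hx⟩ := exists_aeval_shiftedLegendre_add_char hpn hs
  obtain ⟨E, hE, y, hy⟩ := exists_aeval_clausenPoly_add_char hpn (hs.mul hs')
  rw [← aeval_shiftedLegendre_sq, ← aeval_shiftedLegendre_sq] at hy
  have hP := toZMod_aeval_shiftedLegendre hpn s
  set P := aeval s (shiftedLegendre n)
  set P' := aeval s (shiftedLegendre (n + p))
  have h : toZMod (E - 2 * (1 - 2 * s) * P * D) = 0 := by
    refine toZMod_eq_zero_of_sq_dvd_mul
      ⟨D ^ 2 + (P' + (1 - 2 * s) * P + p * D) * x - y, ?_⟩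
    linear_combination (P' + (1 - 2 * s) * P + p * D) * hx - hy
  simp only [map_sub, map_mul, map_one, map_ofNat, hE, hD, hP] at h
  refine mul_left_cancel₀ h4 ?_
  rw [choosePowSqDeriv]
  linear_combination -h

theorem choosePowDeriv_three_eq_zero (hpn : p = 2 * n + 1) {s : ℤ_[p]} (hs : IsUnit s)
    (hs' : IsUnit (1 - s)) (h : choosePowSqDeriv n s = 0) :
    choosePowDeriv n 3 (-4 * (s * (1 - s))) = 0 := by
  have key := mul_choosePowDeriv_three hpn hs hs'
  rw [h, mul_zero, ← map_one toZMod, ← map_sub, ← map_mul] at key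
  exact (mul_eq_zero.1 key).resolve_left (isUnit_iff_toZMod_ne_zero.1 (hs.mul hs'))

theorem choosePowSqDeriv_one_sub (hpn : p = 2 * n + 1) {s : ℤ_[p]} (hs : IsUnit s)
    (hs' : IsUnit (1 - s)) (h2 : IsUnit (1 - 2 * s)) :
    choosePowSqDeriv n (1 - s) = -choosePowSqDeriv n s := by
  have h := mul_choosePowDeriv_three hpn hs hs'
  have h' := mul_choosePowDeriv_three hpn hs' (by rwa [sub_sub_cancel])
  rw [sub_sub_cancel, mul_comm (1 - s), map_sub, map_one] at h'
  have h2 := isUnit_iff_toZMod_ne_zero.1 h2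
  rw [map_sub, map_mul, map_one, map_ofNat] at h2
  refine mul_left_cancel₀ h2 ?_
  linear_combination h' - h

theorem toZMod_pow_two_mul_eq_one (hpn : p = 2 * n + 1) {s : ℤ_[p]} (hs : IsUnit s) :
    toZMod s ^ (2 * n) = 1 := by
  rw [← ZMod.pow_card_sub_one_eq_one (isUnit_iff_toZMod_ne_zero.1 hs)]
  congr 1
  omega

theorem sq_mul_choosePowSqDeriv_of_mul_eq_one (hpn : p = 2 * n + 1) {s a : ℤ_[p]}
    (h : s * a = 1) : toZMod s ^ 2 * choosePowSqDeriv n a = -choosePowSqDeriv n s := by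
  have h1 : toZMod s * toZMod a = 1 := by rw [← map_mul, h, map_one]
  have hs := left_ne_zero_of_mul_eq_one h1
  have hD := pow_mul_choosePowDeriv_of_mul_eq_one n 2 h
  have hS := pow_mul_choosePowSum_inv n 2 hs
  have hpow : (toZMod s ^ n) ^ 2 = 1 := by
    rw [← pow_mul, mul_comm, toZMod_pow_two_mul_eq_one hpn (.of_mul_eq_one _ h)]
  rw [← eq_inv_of_mul_eq_one_right h1] at hS
  calc toZMod s ^ 2 * choosePowSqDeriv n a
      = (toZMod s ^ n) ^ 2 * (toZMod s ^ 2 * choosePowSqDeriv n a) := by rw [hpow, one_mul]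
    _ = toZMod s * (toZMod s * toZMod a) * (toZMod s ^ n * choosePowSum n 2 (toZMod a)) *
          (toZMod s ^ n * choosePowDeriv n 2 a) := by
        rw [choosePowSqDeriv]
        ring
    _ = -choosePowSqDeriv n s := by
        rw [h1, hS, hD, choosePowSqDeriv]
        ring

theorem sq_dvd_aeval_clausenPoly {u : ℤ_[p]} (hu : IsUnit (1 - 4 * u)) {m : ℕ}
    (h : (p : ℤ_[p]) ∣ aeval u (clausenPoly m)) :
    (p : ℤ_[p]) ^ 2 ∣ aeval u (clausenPoly m) := by
  obtain ⟨a, ha | ha⟩ := aeval_clausenPoly_eq_sq_or m u <;> rw [ha] at h ⊢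
  · exact pow_dvd_pow_of_dvd (PadicInt.prime_p.dvd_of_dvd_pow h) 2
  · rw [hu.dvd_mul_right] at h ⊢
    exact pow_dvd_pow_of_dvd (PadicInt.prime_p.dvd_of_dvd_pow h) 2

theorem choosePowDeriv_three_eq_zero_of_choosePowSum_eq_zero (hpn : p = 2 * n + 1) {u : ℤ_[p]}
    (hu : IsUnit u) (hu' : IsUnit (1 - 4 * u)) (h : choosePowSum n 3 (-4 * toZMod u) = 0) :
    choosePowDeriv n 3 (-4 * u) = 0 := by
  obtain ⟨D, hD, hdvd⟩ := exists_aeval_clausenPoly_add_char hpn hu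
  have hF : (p : ℤ_[p]) ∣ aeval u (clausenPoly n) := by
    rwa [← toZMod_eq_zero_iff_dvd, toZMod_aeval_clausenPoly hpn]
  have hF' : (p : ℤ_[p]) ∣ aeval u (clausenPoly (n + p)) :=
    (dvd_iff_dvd_of_dvd_sub ((dvd_pow_self _ two_ne_zero).trans hdvd)).2
      ((hF.mul_left _).add (dvd_mul_right _ _))
  have hpD : (p : ℤ_[p]) ^ 2 ∣ p * D :=
    (dvd_add_right ((sq_dvd_aeval_clausenPoly hu' hF).mul_left _)).1
      ((dvd_iff_dvd_of_dvd_sub hdvd).1 (sq_dvd_aeval_clausenPoly hu' hF'))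
  rw [toZMod_eq_zero_of_sq_dvd_mul hpD, eq_comm, ← map_ofNat toZMod, ← map_neg, ← map_mul] at hD
  exact (mul_eq_zero.1 hD).resolve_left
    (isUnit_iff_toZMod_ne_zero.1 ((isUnit_four_s6 hpn).neg.mul hu))

end Congruences

section QuadraticRoots

open PadicInt (toZMod)

variable {p : ℕ} [Fact p.Prime] {n : ℕ}

open Polynomial in
theorem exists_mul_one_sub_eq_of_toZMod {c : ℤ_[p]} (hc : IsUnit (1 - 4 * c)) {r : ZMod p}
    (hr : r * (1 - r) = toZMod c) : ∃ s : ℤ_[p], s * (1 - s) = c := by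
  obtain ⟨b, rfl⟩ := ZMod.ringHom_surjective toZMod r
  have hderiv : IsUnit (1 - 2 * b) := by
    rw [isUnit_iff_toZMod_ne_zero] at hc ⊢
    refine fun h => hc ?_
    simp only [map_sub, map_mul, map_one, map_ofNat, ← hr] at h ⊢
    linear_combination (1 - 2 * toZMod b) * h
  have hnorm : ‖(X * (1 - X) - C c : ℤ_[p][X]).aeval b‖ <
      ‖(derivative (X * (1 - X) - C c : ℤ_[p][X])).aeval b‖ ^ 2 := by
    have e : (derivative (X * (1 - X) - C c : ℤ_[p][X])).aeval b = 1 - 2 * b := by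
      simp only [derivative_mul, derivative_X, derivative_one, derivative_C,
        map_add, map_sub, map_mul, map_one, map_zero, aeval_X]
      ring
    rw [e, PadicInt.isUnit_iff.1 hderiv, one_pow, PadicInt.norm_lt_one_iff_dvd,
      ← toZMod_eq_zero_iff_dvd]
    simp [hr]
  obtain ⟨s, hs, -⟩ := hensels_lemma hnorm
  exact ⟨s, by simpa [sub_eq_zero] using hs⟩

theorem exists_mul_one_sub_eq_of_pow_eq {K : Type*} [Field K] [Algebra (ZMod p) K] {c : ℤ_[p]}
    (hc : IsUnit (1 - 4 * c)) {t : K} (ht : t * (1 - t) = algebraMap (ZMod p) K (toZMod c))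
    (htp : t ^ p = t) : ∃ s : ℤ_[p], s * (1 - s) = c := by
  have := charP_of_injective_algebraMap (algebraMap (ZMod p) K).injective p
  obtain ⟨r, rfl⟩ : t ∈ (algebraMap (ZMod p) K).fieldRange :=
    (bot_le : (⊥ : Subfield K) ≤ _) ((Subfield.mem_bot_iff_pow_eq_self K p).2 htp)
  refine exists_mul_one_sub_eq_of_toZMod hc (r := r) ((algebraMap (ZMod p) K).injective ?_)
  rw [map_mul, map_sub, map_one, ht]

theorem exists_mul_one_sub_eq {K : Type*} [Field K] [IsAlgClosed K] (h2 : (2 : K) ≠ 0) (c : K) :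
    ∃ t : K, t * (1 - t) = c := by
  obtain ⟨z, hz⟩ := IsAlgClosed.exists_pow_nat_eq (1 - 4 * c) two_pos
  refine ⟨(1 + z) / 2, ?_⟩
  field_simp
  linear_combination -hz

theorem choosePowDeriv_three_eq_zero_of_forall_root (hpn : p = 2 * n + 1) {u : ℤ_[p]}
    (hu : IsUnit u) (hu' : IsUnit (1 - 4 * u))
    (hK : ∀ t : AlgebraicClosure (ZMod p), t * (1 - t) = algebraMap (ZMod p) _ (toZMod u) →
      choosePowSum n 2 t = 0 ∨ t ^ (2 * n) = 1)
    (hZ : ∀ s : ℤ_[p], s * (1 - s) = u → choosePowSqDeriv n s = 0) :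
    choosePowDeriv n 3 (-4 * u) = 0 := by
  have hinj := (algebraMap (ZMod p) (AlgebraicClosure (ZMod p))).injective
  have := charP_of_injective_algebraMap hinj p
  obtain ⟨t, ht⟩ := exists_mul_one_sub_eq (two_ne_zero_of_odd_char hpn)
    (algebraMap (ZMod p) (AlgebraicClosure (ZMod p)) (toZMod u))
  rcases hK t ht with h0 | h1
  · refine choosePowDeriv_three_eq_zero_of_choosePowSum_eq_zero hpn hu hu' (hinj ?_)
    rw [map_choosePowSum, map_mul, map_neg, map_ofNat, ← ht, ← choosePowSum_two_sq hpn, h0,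
      zero_pow two_ne_zero, map_zero]
  · obtain ⟨s, rfl⟩ := exists_mul_one_sub_eq_of_pow_eq hu' ht
      (by rw [congrArg (t ^ ·) hpn, pow_succ, h1, one_mul])
    exact choosePowDeriv_three_eq_zero hpn (isUnit_of_mul_isUnit_left hu)
      (isUnit_of_mul_isUnit_right hu) (hZ s rfl)

end QuadraticRoots

section SpecialValues

open PadicInt (toZMod)

variable {p : ℕ} [Fact p.Prime] {n : ℕ}

theorem choosePowDeriv_one_eq_zero (hpn : p = 2 * n + 1) (r : ℕ) :
    choosePowDeriv n r (1 : ℤ_[p]) = 0 := by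
  have h := pow_mul_choosePowDeriv_of_mul_eq_one n r (mul_one (1 : ℤ_[p]))
  rw [map_one, one_pow, one_mul] at h
  refine (mul_eq_zero.1 ?_).resolve_left (two_ne_zero_of_odd_char (K := ZMod p) hpn)
  linear_combination h

theorem choosePowDeriv_three_eight_eq_zero (hpn : p = 2 * n + 1) :
    choosePowDeriv n 3 (8 : ℤ_[p]) = 0 := by
  have hT : choosePowSqDeriv n (-1 : ℤ_[p]) = 0 := by
    have h := sq_mul_choosePowSqDeriv_of_mul_eq_one hpn (show (-1 : ℤ_[p]) * -1 = 1 by norm_num)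
    rw [map_neg, map_one, neg_one_sq, one_mul] at h
    refine (mul_eq_zero.1 ?_).resolve_left (two_ne_zero_of_odd_char (K := ZMod p) hpn)
    linear_combination h
  rw [show (8 : ℤ_[p]) = -4 * (-1 * (1 - -1)) by norm_num]
  exact choosePowDeriv_three_eq_zero hpn isUnit_one.neg
    (by rw [sub_neg_eq_add, one_add_one_eq_two]; exact isUnit_two_s6 hpn) hT

theorem choosePowDeriv_three_neg_four_eq_zero (hpn : p = 2 * n + 1)
    (h4 : IsUnit (1 - 4 : ℤ_[p])) : choosePowDeriv n 3 (-4 : ℤ_[p]) = 0 := by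
  rw [← mul_one (-4)]
  refine choosePowDeriv_three_eq_zero_of_forall_root hpn isUnit_one (by rwa [mul_one])
    (fun t ht => ?_) fun s hs => ?_
  · have := charP_of_injective_algebraMap
      (algebraMap (ZMod p) (AlgebraicClosure (ZMod p))).injective p
    rw [map_one, map_one] at ht
    exact choosePowSum_eq_zero_or_pow_eq_one_of_mul_one_sub_eq_one hpn ht
  · have hsq : (1 - 2 * s) * (1 - 2 * s) = 1 - 4 := by linear_combination -4 * hs
    have h1 := choosePowSqDeriv_one_sub hpn (.of_mul_eq_one _ hs) (.of_mul_eq_one_right _ hs)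
      (isUnit_of_mul_isUnit_left (hsq ▸ h4))
    have h2 := sq_mul_choosePowSqDeriv_of_mul_eq_one hpn hs
    have h3 := isUnit_iff_toZMod_ne_zero.1 h4
    refine (mul_eq_zero.1 ?_).resolve_left h3
    replace hs := congrArg toZMod hs
    simp only [map_mul, map_sub, map_one, map_ofNat] at hs ⊢
    rw [h1] at h2
    linear_combination (-1 - toZMod s) * h2 + (2 + toZMod s) * choosePowSqDeriv n s * hs

theorem mul_choosePowDeriv_three_of_mul_eq_one (hpn : p = 2 * n + 1) {s a : ℤ_[p]}
    (h : s * a = 1) (hs' : IsUnit (1 - s)) :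
    toZMod (s * (1 - s)) * choosePowDeriv n 3 (-4 * (a * (1 - a))) =
      (toZMod s - 2) * choosePowSqDeriv n s := by
  have ha : IsUnit (1 - a) := by
    refine isUnit_of_mul_isUnit_right (x := s) ?_
    rw [mul_sub, h, mul_one, ← neg_sub]
    exact hs'.neg
  have h1 := mul_choosePowDeriv_three hpn (.of_mul_eq_one_right _ h) ha
  have h2 := sq_mul_choosePowSqDeriv_of_mul_eq_one hpn h
  have h3 : toZMod s * toZMod a = 1 := by rw [← map_mul, h, map_one]
  simp only [map_mul, map_sub, map_one]
  linear_combination -toZMod s ^ 3 * h1 - (toZMod s - 2) * h2 +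
    ((toZMod s ^ 2 - toZMod s ^ 2 * toZMod a - toZMod s) * choosePowDeriv n 3 (-4 * (a * (1 - a))) +
      2 * toZMod s ^ 2 * choosePowSqDeriv n a) * h3

theorem neg_four_mul_pow_eq_one_of_mul_one_sub_eq_sixteen (hpn : p = 2 * n + 1) {s a : ℤ_[p]}
    (hs : s * (1 - s) = 16) (h0 : choosePowSum n 2 (toZMod s) ≠ 0) (ha : s * a = 1) :
    toZMod (-4 * (a * (1 - a))) ^ n = 1 := by
  have hy : s ^ 2 * (-4 * (a * (1 - a))) = 4 * (1 - s) := by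
    linear_combination (4 * s * a + 4 - 4 * s) * ha
  have hs1 : toZMod (1 - s) ^ n = 1 := by
    rw [map_sub, map_one]
    refine one_sub_pow_eq_one_of_mul_one_sub_eq_sixteen hpn ?_ h0
    rw [← map_one toZMod, ← map_sub, ← map_mul, hs, map_ofNat]
  have h := congrArg toZMod hy
  rw [map_mul _ (s ^ 2), map_mul _ 4, map_pow, map_ofNat] at h
  have hs2 := toZMod_pow_two_mul_eq_one hpn (.of_mul_eq_one _ ha)
  have h' : toZMod s ^ (2 * n) * toZMod (-4 * (a * (1 - a))) ^ n = 1 := by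
    rw [pow_mul, ← mul_pow, h, mul_pow, hs1, four_pow_eq_one hpn, mul_one]
  rwa [hs2, one_mul] at h'

theorem choosePowSqDeriv_eq_zero_of_mul_one_sub_eq_sixteen (hpn : p = 2 * n + 1)
    (h64 : IsUnit (1 - 64 : ℤ_[p])) {s : ℤ_[p]} (hs : s * (1 - s) = 16) :
    choosePowSqDeriv n s = 0 := by
  by_cases hS : choosePowSum n 2 (toZMod s) = 0
  · rw [choosePowSqDeriv, hS, mul_zero, zero_mul]
  have h16 : IsUnit (s * (1 - s)) := by
    rw [hs, show (16 : ℤ_[p]) = 4 * 4 by norm_num]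
    exact (isUnit_four_s6 hpn).mul (isUnit_four_s6 hpn)
  have hu := isUnit_of_mul_isUnit_left h16
  have hu' := isUnit_of_mul_isUnit_right h16
  have hsq : (1 - 2 * s) * (1 - 2 * s) = 1 - 64 := by linear_combination -4 * hs
  have h2 : IsUnit (1 - 2 * s) := isUnit_of_mul_isUnit_left (hsq ▸ h64)
  obtain ⟨a, ha⟩ := hu.exists_right_inv
  obtain ⟨b, hb⟩ := hu'.exists_right_inv
  have hab : 16 * (a * b) = 1 := by linear_combination -(a * b) * hs + (1 - s) * b * ha + hb
  have hab' : a + b = a * b := by linear_combination -b * ha - a * hb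
  have hyz : -4 * (a * (1 - a)) * (-4 * (b * (1 - b))) = 1 := by
    linear_combination (1 - a - b + a * b) * hab - hab'
  have hpow := neg_four_mul_pow_eq_one_of_mul_one_sub_eq_sixteen hpn hs hS ha
  have hD := pow_mul_choosePowDeriv_of_mul_eq_one n 3 hyz
  have hT := choosePowSqDeriv_one_sub hpn hu hu' h2
  have key := mul_choosePowDeriv_three_of_mul_eq_one hpn ha hu'
  have key' := mul_choosePowDeriv_three_of_mul_eq_one hpn hb (by rwa [sub_sub_cancel])
  rw [hpow, one_mul] at hD
  rw [sub_sub_cancel, mul_comm (1 - s), hD, hT, map_sub, map_one] at key'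
  refine (mul_eq_zero.1 ?_).resolve_left (isUnit_iff_toZMod_ne_zero.1 h2)
  rw [map_sub, map_mul, map_one, map_ofNat]
  linear_combination key + key'

theorem choosePowDeriv_three_neg_sixtyFour_eq_zero (hpn : p = 2 * n + 1)
    (h64 : IsUnit (1 - 64 : ℤ_[p])) : choosePowDeriv n 3 (-64 : ℤ_[p]) = 0 := by
  have h16 : IsUnit (16 : ℤ_[p]) := by
    rw [show (16 : ℤ_[p]) = 4 * 4 by norm_num]
    exact (isUnit_four_s6 hpn).mul (isUnit_four_s6 hpn)
  rw [show (-64 : ℤ_[p]) = -4 * 16 by norm_num]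
  refine choosePowDeriv_three_eq_zero_of_forall_root hpn h16
    (by rwa [show (1 - 4 * 16 : ℤ_[p]) = 1 - 64 by norm_num])
    (fun t ht => ?_) fun s hs =>
      choosePowSqDeriv_eq_zero_of_mul_one_sub_eq_sixteen hpn h64 hs
  have := charP_of_injective_algebraMap
    (algebraMap (ZMod p) (AlgebraicClosure (ZMod p))).injective p
  rw [map_ofNat, map_ofNat] at ht
  rw [or_iff_not_imp_left]
  intro h0
  have h1 : choosePowSum n 2 (1 - t) ≠ 0 := by
    rwa [← sq_eq_zero_iff.ne, choosePowSum_one_sub_sq hpn, sq_eq_zero_iff.ne]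
  have h := one_sub_pow_eq_one_of_mul_one_sub_eq_sixteen hpn
    (by rw [sub_sub_cancel, mul_comm, ht]) h1
  rw [sub_sub_cancel] at h
  rw [mul_comm, pow_mul, h, one_pow]

theorem choosePowDeriv_three_neg_eq_zero (hpn : p = 2 * n + 1) {m : ℤ}
    (hm : m ∈ ({-8, 4, 64, -1} : Set ℤ)) (h : IsUnit (1 - m : ℤ_[p])) :
    choosePowDeriv n 3 (-m : ℤ_[p]) = 0 := by
  rcases hm with rfl | rfl | rfl | rfl <;> push_cast at h ⊢
  · rw [neg_neg]
    exact choosePowDeriv_three_eight_eq_zero hpn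
  · exact choosePowDeriv_three_neg_four_eq_zero hpn h
  · exact choosePowDeriv_three_neg_sixtyFour_eq_zero hpn h
  · rw [neg_neg]
    exact choosePowDeriv_one_eq_zero hpn 3

theorem choosePowDeriv_three_neg_eq_zero_of_mul_eq_one (hpn : p = 2 * n + 1) {m : ℤ}
    (hm : m ∈ ({-8, 4, 64, -1} : Set ℤ)) {y : ℤ_[p]} (hy : y * m = 1) (h : IsUnit (1 - y)) :
    choosePowDeriv n 3 (-y) = 0 := by
  have hm' : IsUnit (1 - m : ℤ_[p]) := by
    refine isUnit_of_mul_isUnit_right (x := y) ?_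
    rw [mul_sub, hy, mul_one, ← neg_sub]
    exact h.neg
  have key := pow_mul_choosePowDeriv_of_mul_eq_one n 3 (y := -y) (z := -m) (by rwa [neg_mul_neg])
  rwa [choosePowDeriv_three_neg_eq_zero hpn hm hm', mul_zero, eq_comm, neg_eq_zero] at key

theorem choosePowDeriv_three_neg_eq_zero_of_coe_eq (hpn : p = 2 * n + 1) {lamQ : ℚ}
    (hCM : lamQ ∈ ({-8, -1/8, 4, 1/4, 64, 1/64, -1} : Set ℚ)) {lam : ℤ_[p]}
    (hlift : (lam : ℚ_[p]) = (lamQ : ℚ_[p])) (h1 : toZMod lam ≠ 1) :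
    choosePowDeriv n 3 (-lam) = 0 := by
  have hunit : IsUnit (1 - lam) := by
    rw [isUnit_iff_toZMod_ne_zero, map_sub, map_one]
    exact sub_ne_zero.2 h1.symm
  obtain ⟨m, hm, hlam | hlam⟩ :
      ∃ m ∈ ({-8, 4, 64, -1} : Set ℤ), lamQ = m ∨ lamQ * m = 1 := by
    rcases hCM with rfl | rfl | rfl | rfl | rfl | rfl | rfl <;> norm_num
  · obtain rfl : lam = m := PadicInt.ext (by rw [hlift, hlam]; simp)
    exact choosePowDeriv_three_neg_eq_zero hpn hm hunit
  · refine choosePowDeriv_three_neg_eq_zero_of_mul_eq_one hpn hm (PadicInt.ext ?_) hunit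
    rw [PadicInt.coe_mul, PadicInt.coe_intCast, PadicInt.coe_one, hlift]
    exact_mod_cast hlam

end SpecialValues

section Transfer

open PadicInt (toZMod)

variable {p : ℕ} [Fact p.Prime]

/-- The relation between a `p`-adic integer `x`, seen in `ℚ_[p]`, and its residue class `r`. -/
def HasResidue (x : ℚ_[p]) (r : ZMod p) : Prop :=
  ∃ z : ℤ_[p], (z : ℚ_[p]) = x ∧ toZMod z = r

namespace HasResidue

variable {x y : ℚ_[p]} {r s : ZMod p}

theorem coe (z : ℤ_[p]) : HasResidue (z : ℚ_[p]) (toZMod z) := ⟨z, rfl, rfl⟩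

theorem natCast (k : ℕ) : HasResidue (k : ℚ_[p]) (k : ZMod p) :=
  ⟨k, PadicInt.coe_natCast k, map_natCast _ k⟩

theorem add (h : HasResidue x r) (h' : HasResidue y s) : HasResidue (x + y) (r + s) := by
  obtain ⟨z, rfl, rfl⟩ := h
  obtain ⟨w, rfl, rfl⟩ := h'
  exact ⟨z + w, PadicInt.coe_add z w, map_add _ z w⟩

theorem sub (h : HasResidue x r) (h' : HasResidue y s) : HasResidue (x - y) (r - s) := by
  obtain ⟨z, rfl, rfl⟩ := h
  obtain ⟨w, rfl, rfl⟩ := h'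
  exact ⟨z - w, PadicInt.coe_sub z w, map_sub _ z w⟩

theorem mul (h : HasResidue x r) (h' : HasResidue y s) : HasResidue (x * y) (r * s) := by
  obtain ⟨z, rfl, rfl⟩ := h
  obtain ⟨w, rfl, rfl⟩ := h'
  exact ⟨z * w, PadicInt.coe_mul z w, map_mul _ z w⟩

theorem pow (h : HasResidue x r) (k : ℕ) : HasResidue (x ^ k) (r ^ k) := by
  obtain ⟨z, rfl, rfl⟩ := h
  exact ⟨z ^ k, PadicInt.coe_pow z k, map_pow _ z k⟩

theorem inv (h : HasResidue x r) (hr : r ≠ 0) : HasResidue x⁻¹ r⁻¹ := by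
  obtain ⟨z, rfl, rfl⟩ := h
  obtain ⟨w, hw⟩ := (isUnit_iff_toZMod_ne_zero.2 hr).exists_right_inv
  refine ⟨w, eq_inv_of_mul_eq_one_right ?_, eq_inv_of_mul_eq_one_right ?_⟩
  · rw [← PadicInt.coe_mul, hw, PadicInt.coe_one]
  · rw [← map_mul, hw, map_one]

theorem sum {ι : Type*} {t : Finset ι} {f : ι → ℚ_[p]} {g : ι → ZMod p}
    (h : ∀ i ∈ t, HasResidue (f i) (g i)) : HasResidue (∑ i ∈ t, f i) (∑ i ∈ t, g i) := by
  choose! z hz hz' using h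
  refine ⟨∑ i ∈ t, z i, ?_, ?_⟩
  · rw [PadicInt.coe_sum, sum_congr rfl hz]
  · rw [map_sum, sum_congr rfl hz']

theorem norm_le (h : HasResidue x 0) : ‖x‖ ≤ (p : ℝ) ^ (-1 : ℤ) := by
  obtain ⟨z, rfl, hz⟩ := h
  have h := PadicInt.norm_le_pow_iff_mem_span_pow z 1
  rw [pow_one, Ideal.mem_span_singleton, ← toZMod_eq_zero_iff_dvd] at h
  exact_mod_cast h.2 hz

end HasResidue

theorem hasResidue_harmonicSum {k : ℕ} (hk : k < p) :
    HasResidue (harmonicSum k : ℚ_[p]) (fieldHarmonic (ZMod p) k) := by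
  have h : (harmonicSum k : ℚ_[p]) = ∑ j ∈ range k, ((j + 1 : ℕ) : ℚ_[p])⁻¹ := by
    have h' : harmonicSum k = harmonic k := by
      simp only [harmonicSum, harmonic_eq_sum_Icc, one_div]
    rw [h', harmonic, Rat.cast_sum]
    exact sum_congr rfl fun j _ => by rw [Rat.cast_inv, Rat.cast_natCast]
  rw [h]
  exact HasResidue.sum fun j hj => (HasResidue.natCast (j + 1)).inv
    (natCast_ne_zero_of_lt (p := p) j.succ_pos (by have := mem_range.1 hj; omega))

theorem hasResidue_fermatQuotient {y : ℤ_[p]} (hy : IsUnit y) :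
    HasResidue (((y : ℚ_[p]) ^ (p - 1) - 1) / (p : ℚ_[p])) (fermatQuotient y) := by
  obtain ⟨q, hq, h⟩ := hasLogRatio_fermatQuotient hy
  refine ⟨q, ?_, hq⟩
  rw [eq_div_iff (Nat.cast_ne_zero.2 (Fact.out : p.Prime).ne_zero)]
  have h := congrArg (fun z : ℤ_[p] => (z : ℚ_[p])) h
  push_cast at h
  linear_combination -h

theorem choosePowDeriv_three_neg_sixtyFour_mul {n : ℕ} (hpn : p = 2 * n + 1) {y : ℤ_[p]}
    (hy : IsUnit y) : choosePowDeriv n 3 (-64 * y) = ∑ i ∈ range (n + 1),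
      (i.centralBinom : ZMod p) ^ 3 * toZMod y ^ i *
        (6 * (fieldHarmonic (ZMod p) (2 * i) - fieldHarmonic (ZMod p) i) + fermatQuotient y) := by
  have h4 : IsUnit (-4 : ℤ_[p]) := (isUnit_four_s6 hpn).neg
  have hq : fermatQuotient (-64 * y) = fermatQuotient y - 3 * fieldHarmonic (ZMod p) n := by
    rw [show -64 * y = -4 * (-4 * (-4 * y)) by ring,
      fermatQuotient_neg_four_mul hpn (h4.mul (h4.mul hy)),
      fermatQuotient_neg_four_mul hpn (h4.mul hy), fermatQuotient_neg_four_mul hpn hy]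
    ring
  refine sum_congr rfl fun i hi => ?_
  have hi := mem_range_succ_iff.1 hi
  rw [cast_centralBinom hpn hi, fieldHarmonic_sub hpn hi, hq, mul_pow, ← pow_mul, mul_comm i,
    pow_mul, map_mul, map_neg, map_ofNat, show (-64 : ZMod p) = (-4) ^ 3 by norm_num, mul_pow]
  push_cast
  ring

theorem hasResidue_sum_choosePowDeriv {n : ℕ} (hpn : p = 2 * n + 1) {y : ℤ_[p]} (hy : IsUnit y) :
    HasResidue (∑ i ∈ range (n + 1), (Nat.choose (2 * i) i : ℚ_[p]) ^ 3 * (y : ℚ_[p]) ^ i *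
        (6 * ((harmonicSum (2 * i) : ℚ_[p]) - (harmonicSum i : ℚ_[p])) +
          ((y : ℚ_[p]) ^ (p - 1) - 1) / (p : ℚ_[p])))
      (choosePowDeriv n 3 (-64 * y)) := by
  rw [choosePowDeriv_three_neg_sixtyFour_mul hpn hy]
  refine HasResidue.sum fun i hi => ?_
  have hi := mem_range_succ_iff.1 hi
  have hH := (hasResidue_harmonicSum (show 2 * i < p by omega)).sub
    (hasResidue_harmonicSum (show i < p by omega))
  exact (((HasResidue.natCast _).pow 3).mul ((HasResidue.coe y).pow i)).mul
    (((HasResidue.natCast 6).mul hH).add (hasResidue_fermatQuotient hy))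

theorem exists_coe_eq_div_sixtyFour {n : ℕ} (hpn : p = 2 * n + 1) {x : ℤ_[p]} (hx : IsUnit x) :
    ∃ y : ℤ_[p], IsUnit y ∧ 64 * y = x ∧ (y : ℚ_[p]) = (x : ℚ_[p]) / 64 := by
  have h64 : IsUnit (64 : ℤ_[p]) := by
    rw [show (64 : ℤ_[p]) = 4 ^ 3 by norm_num]
    exact (isUnit_four_s6 hpn).pow 3
  obtain ⟨y, rfl⟩ := h64.dvd (a := x)
  refine ⟨y, isUnit_of_mul_isUnit_right hx, rfl, ?_⟩
  have h : ((64 : ℤ_[p]) : ℚ_[p]) = 64 := map_ofNat PadicInt.Coe.ringHom 64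
  rw [PadicInt.coe_mul, h, mul_div_cancel_left₀ _ (by norm_num)]

end Transfer

theorem stmt6 (lamQ : ℚ)
    (hCM : lamQ ∈ ({-8, -1/8, 4, 1/4, 64, 1/64, -1} : Set ℚ))
    (p : ℕ) [Fact p.Prime] (hp : 3 < p)
    (lam : ℤ_[p]) (hlift : (lam : ℚ_[p]) = (lamQ : ℚ_[p]))
    (h0 : PadicInt.toZMod lam ≠ 0) (h1 : PadicInt.toZMod lam ≠ 1) :
    ‖∑ i ∈ range ((p - 1) / 2 + 1),
        (Nat.choose (2 * i) i : ℚ_[p]) ^ 3 * ((lam : ℚ_[p]) / 64) ^ i *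
          ((6 * ((harmonicSum (2 * i) : ℚ_[p]) - (harmonicSum i : ℚ_[p])))
            + (((lam : ℚ_[p]) / 64) ^ (p - 1) - 1) / p)‖
      ≤ (p : ℝ) ^ (-1 : ℤ) := by
  have hpn : p = 2 * ((p - 1) / 2) + 1 := by
    obtain ⟨k, hk⟩ := (Fact.out : p.Prime).odd_of_ne_two (by omega)
    omega
  obtain ⟨y, hy, rfl, hdiv⟩ := exists_coe_eq_div_sixtyFour hpn (isUnit_iff_toZMod_ne_zero.2 h0)
  have hD := choosePowDeriv_three_neg_eq_zero_of_coe_eq hpn hCM hlift h1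
  rw [← neg_mul] at hD
  rw [← hdiv]
  exact (hD ▸ hasResidue_sum_choosePowDeriv hpn hy).norm_le
end
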